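/- arXiv:1712.03504 — 2 statements merged into one kernel-verified Lean document; each statement's English description precedes it below -/
import Mathlib

section
/- Let C ⊂ R^{2k+2ℓ+2} be the convex hull of the vectors ρ(e), where e ranges over the edges of a vertex-disjoint union of a cycle of length 2k+1 and a cycle of length 2ℓ+1 on a common vertex set of 2k+2ℓ+2 vertices (k, ℓ ≥ 1). Then dim C = 2k+2ℓ+1, the all-ones vector (1,1,...,1) lies in the interior of (k+ℓ+1)C, so codeg(C) ≤ k+ℓ+1 and hence deg(C) ≥ k+ℓ+1. -/
open MvPolynomial Pointwise

/-- `ρ({i,j}) = e_i + e_j` : the 0/1 (incidence) vector of an edge. -/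
noncomputable def rho {N : ℕ} (e : Sym2 (Fin N)) : Fin N → ℝ :=
  fun v => if v ∈ e then 1 else 0

/-- The edge polytope of a graph on `Fin N`. -/
noncomputable def edgePolytope {N : ℕ} (G : SimpleGraph (Fin N)) : Set (Fin N → ℝ) :=
  convexHull ℝ (rho '' G.edgeSet)

/-- Number of lattice points of the `t`-th dilation (`= 1` for `t = 0`). -/
noncomputable def ehr {N : ℕ} (P : Set (Fin N → ℝ)) (t : ℕ) : ℕ :=
  if t = 0 then 1 else Nat.card {x : Fin N → ℤ // (fun i => (x i : ℝ)) ∈ (t : ℝ) • P}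

/-- The dimension of a polytope: the rank of the direction of its affine span. -/
noncomputable def polyDim {N : ℕ} (P : Set (Fin N → ℝ)) : ℕ :=
  Module.finrank ℝ (affineSpan ℝ P).direction

/-- The `i`-th coefficient of `(1-λ)^{d+1} (1 + Σ_{t≥1} |tP ∩ Z^N| λ^t)`. -/
noncomputable def deltaCoeff {N : ℕ} (P : Set (Fin N → ℝ)) (i : ℕ) : ℤ :=
  ∑ j ∈ Finset.range (i + 1),
    (-1 : ℤ) ^ j * (Nat.choose (polyDim P + 1) j : ℤ) * (ehr P (i - j) : ℤ)

/-- The degree of the δ-polynomial of `P`. -/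
noncomputable def polyDeg {N : ℕ} (P : Set (Fin N → ℝ)) : ℕ :=
  sSup {i : ℕ | deltaCoeff P i ≠ 0}

/-- The monomial `t_i t_j s` attached to an edge `{i,j}`; `s` is the variable `none`. -/
noncomputable def edgeMonom (K : Type*) [Field K] {V : Type*} (e : Sym2 V) :
    MvPolynomial (Option V) K :=
  Sym2.lift ⟨fun i j => X (some i) * X (some j) * X none, fun i j => by ring⟩ e

/-- The edge ring `K[G]`, the subalgebra generated by the monomials `t^{ρ(e)} s`. -/
noncomputable def edgeRing (K : Type*) [Field K] {V : Type*} (G : SimpleGraph V) :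
    Subalgebra K (MvPolynomial (Option V) K) :=
  Algebra.adjoin K (edgeMonom K '' G.edgeSet)

/-- The toric ideal `I_G`: kernel of `x_e ↦ t^{ρ(e)} s`. -/
noncomputable def toricIdeal (K : Type*) [Field K] {V : Type*} (G : SimpleGraph V) :
    Ideal (MvPolynomial G.edgeSet K) :=
  RingHom.ker (MvPolynomial.aeval (fun e : G.edgeSet => edgeMonom K (e : Sym2 V)) :
    MvPolynomial G.edgeSet K →ₐ[K] MvPolynomial (Option V) K)

/-- `S/I` has a `q`-linear (minimal graded free) resolution: there is a graded free
resolution of `S/I` in which the free module at homological step `i ≥ 1` is generated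
in the single degree `q + i - 1`; equivalently all Betti numbers `β_{i,j}` with
`j ≠ q + i - 1` vanish. -/
def HasLinearResolution {σ K : Type*} [Field K] (q : ℕ)
    (I : Ideal (MvPolynomial σ K)) : Prop :=
  ∃ (b : ℕ → ℕ)
    (φ₀ : (Fin (b 0) →₀ MvPolynomial σ K) →ₗ[MvPolynomial σ K] MvPolynomial σ K)
    (φ : ∀ i : ℕ,
      (Fin (b (i + 1)) →₀ MvPolynomial σ K) →ₗ[MvPolynomial σ K]
        (Fin (b i) →₀ MvPolynomial σ K)),
    LinearMap.range φ₀ = I ∧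
    LinearMap.ker φ₀ = LinearMap.range (φ 0) ∧
    (∀ i, LinearMap.ker (φ i) = LinearMap.range (φ (i + 1))) ∧
    (∀ j, (φ₀ (Finsupp.single j 1)).IsHomogeneous q) ∧
    (∀ i j k, ((φ i (Finsupp.single j 1)) k).IsHomogeneous 1)

/-- `σ` permutes `A` and its complement cyclically, and both sets have odd size. -/
structure IsOddCyclePair {V : Type*} [Fintype V] [DecidableEq V]
    (σ : Equiv.Perm V) (A : Finset V) : Prop where
  exists_pow_apply_eq : ∀ u v, (u ∈ A ↔ v ∈ A) → ∃ j : ℕ, (σ ^ j) u = v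
  odd_card : Odd A.card
  odd_card_compl : Odd Aᶜ.card
  exists_odd_pow_eq_one : ∃ n, Odd n ∧ σ ^ n = 1

theorem SimpleGraph.Walk.IsCycle.exists_cyclic_enumeration {V : Type*} {G : SimpleGraph V} {v : V}
    {c : G.Walk v v} (hc : c.IsCycle) {m : ℕ} (hm : c.length = m + 1) :
    ∃ f : Fin (m + 1) → V, Function.Injective f ∧ Set.range f = {x | x ∈ c.support} ∧
      {e | e ∈ c.edges} = Set.range fun i => s(f i, f (i + 1)) := by
  have hsucc (i : Fin (m + 1)) : c.getVert ((i + 1 : Fin (m + 1)) : ℕ) = c.getVert (i + 1) := by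
    rw [Fin.val_add_one]
    split_ifs with h
    · subst h
      simp [← hm]
    · rfl
  refine ⟨fun i => c.getVert i, ?_, ?_, ?_⟩
  · intro i j hij
    exact Fin.ext (hc.getVert_injOn' (by simp; omega) (by simp; omega) hij)
  · ext x
    simp only [Set.mem_range, Set.mem_ofPred_eq]
    constructor
    · rintro ⟨i, rfl⟩
      exact c.getVert_mem_support i
    · intro hx
      obtain ⟨n, rfl, hn⟩ := SimpleGraph.Walk.mem_support_iff_exists_getVert.1 hx
      rcases hn.lt_or_eq with hn | rfl
      · exact ⟨⟨n, hm ▸ hn⟩, rfl⟩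
      · exact ⟨0, by simp⟩
  · ext e
    simp only [Set.mem_range, Set.mem_ofPred_eq, hsucc]
    rw [List.mem_iff_getElem]
    constructor
    · rintro ⟨n, hn, rfl⟩
      exact ⟨⟨n, by simpa [hm] using hn⟩, by simp [SimpleGraph.Walk.getElem_edges]⟩
    · rintro ⟨i, rfl⟩
      exact ⟨i, by simp [hm]; omega, by simp [SimpleGraph.Walk.getElem_edges]⟩

theorem Fin.val_nsmul_one {m : ℕ} (i : Fin (m + 1)) : i.val • (1 : Fin (m + 1)) = i := by
  have h : ((i.val : ZMod (m + 1))) = i := ZMod.natCast_zmod_val (n := m + 1) i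
  rw [← nsmul_one] at h
  exact h

/-- A disjoint union of two odd cycles is the orbit graph of a permutation. -/
theorem exists_isOddCyclePair {V : Type*} [Fintype V] [DecidableEq V] {G : SimpleGraph V}
    {k l : ℕ} {v w : V} {c₁ : G.Walk v v} {c₂ : G.Walk w w}
    (hc₁ : c₁.IsCycle) (hc₂ : c₂.IsCycle)
    (hlen₁ : c₁.length = 2 * k + 1) (hlen₂ : c₂.length = 2 * l + 1)
    (hdisj : ∀ x, x ∈ c₁.support → x ∉ c₂.support)
    (hcover : ∀ x, x ∈ c₁.support ∨ x ∈ c₂.support)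
    (hedge : G.edgeSet = {e | e ∈ c₁.edges} ∪ {e | e ∈ c₂.edges}) :
    ∃ (σ : Equiv.Perm V) (A : Finset V), IsOddCyclePair σ A ∧
      G.edgeSet = Set.range fun v => s(v, σ.symm v) := by
  obtain ⟨f, hf, hfs, hfe⟩ := hc₁.exists_cyclic_enumeration hlen₁
  obtain ⟨g, hg, hgs, hge⟩ := hc₂.exists_cyclic_enumeration hlen₂
  have hfs' (i) : f i ∈ c₁.support := hfs.subset ⟨i, rfl⟩
  have hgs' (i) : g i ∈ c₂.support := hgs.subset ⟨i, rfl⟩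
  have hbij : Function.Bijective (Sum.elim f g) := by
    constructor
    · exact hf.sumElim hg fun i j h => hdisj _ (hfs' i) (h ▸ hgs' j)
    · intro x
      rcases hcover x with h | h
      · obtain ⟨i, rfl⟩ := hfs.superset h
        exact ⟨.inl i, rfl⟩
      · obtain ⟨i, rfl⟩ := hgs.superset h
        exact ⟨.inr i, rfl⟩
  let E := Equiv.ofBijective _ hbij
  let p : Equiv.Perm (Fin (2 * k + 1) ⊕ Fin (2 * l + 1)) :=
    Equiv.Perm.sumCongr (Equiv.addRight 1) (Equiv.addRight 1)
  have hp (j : ℕ) : p ^ j = Equiv.Perm.sumCongr (Equiv.addRight 1 ^ j) (Equiv.addRight 1 ^ j) := by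
    induction j with
    | zero => simp
    | succ j ih => rw [pow_succ, ih, Equiv.Perm.sumCongr_mul, ← pow_succ, ← pow_succ]
  let σ := E.permCongrHom p
  have hσ (j : ℕ) (x) : (σ ^ j) (E x) = E ((p ^ j) x) := by
    simp only [σ, ← map_pow]
    simp
  have hmem (x) : E x ∈ Finset.univ.image f ↔ x.isLeft := by
    rcases x with i | i
    · simp [E]
    · simpa [E] using fun j (h : f j = g i) => hdisj _ (hfs' j) (h ▸ hgs' i)
  have hcompl : (Finset.univ.image f)ᶜ = Finset.univ.image g := by
    ext x
    obtain ⟨x, rfl⟩ := E.surjective x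
    rw [Finset.mem_compl, hmem]
    rcases x with i | i
    · simpa [E] using fun j (h : g j = f i) => hdisj _ (hfs' i) (h ▸ hgs' j)
    · simp [E]
  refine ⟨σ, Finset.univ.image f, ⟨?_, ?_, ?_, (2 * k + 1) * (2 * l + 1), ?_, ?_⟩, ?_⟩
  · intro u v h
    obtain ⟨u, rfl⟩ := E.surjective u
    obtain ⟨v, rfl⟩ := E.surjective v
    rw [hmem, hmem] at h
    rcases u with i | i <;> rcases v with j | j <;> simp at h
    · refine ⟨(j - i).val, ?_⟩
      rw [hσ, hp]
      simp [-nsmul_one, Fin.val_nsmul_one]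
    · refine ⟨(j - i).val, ?_⟩
      rw [hσ, hp]
      simp [-nsmul_one, Fin.val_nsmul_one]
  · rw [Finset.card_image_of_injective _ hf]; simp
  · rw [hcompl, Finset.card_image_of_injective _ hg]; simp
  · exact Odd.mul (by simp) (by simp)
  · ext x
    obtain ⟨x, rfl⟩ := E.surjective x
    rw [hσ, hp]
    rcases x with i | i
    · have := card_nsmul_eq_zero (x := (1 : Fin (2 * k + 1)))
      rw [Fintype.card_fin] at this
      simp [-nsmul_one, mul_nsmul, this]
    · have := card_nsmul_eq_zero (x := (1 : Fin (2 * l + 1)))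
      rw [Fintype.card_fin] at this
      simp [-nsmul_one, mul_nsmul', this]
  · rw [hedge, hfe, hge]
    have : ((fun v => s(v, σ.symm v)) ∘ σ) ∘ E = Sum.elim (fun i => s(f i, f (i + 1)))
        (fun i => s(g i, g (i + 1))) := by
      ext1 x
      have := hσ 1 x
      simp only [pow_one] at this
      rw [Function.comp_apply, Function.comp_apply, Equiv.symm_apply_apply, Sym2.eq_swap, this]
      rcases x with i | i <;> simp [p, E]
    rw [← σ.surjective.range_comp, ← E.surjective.range_comp, this, Set.Sum.elim_range]

theorem two_nsmul_eq_zero_of_add_apply_eq_zero {V Q : Type*} [AddCommGroup Q]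
    {σ : Equiv.Perm V} {q : V → Q}
    (hq : ∀ v, q v + q (σ v) = 0) {n : ℕ} (hn : Odd n) (hσ : σ ^ n = 1) (v : V) :
    2 • q v = 0 := by
  have key (j : ℕ) : q ((σ ^ j) v) = (-1 : ℤ) ^ j • q v := by
    induction j with
    | zero => simp
    | succ j ih =>
      rw [pow_succ', Equiv.Perm.mul_apply, ← neg_eq_of_add_eq_zero_right (hq ((σ ^ j) v)), ih,
        pow_succ', mul_smul, neg_one_smul]
  have := key n
  rw [hσ, hn.neg_one_pow, neg_one_smul, Equiv.Perm.one_apply] at this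
  rw [two_nsmul]
  nth_rewrite 1 [this]
  simp

theorem IsOddCyclePair.exists_forall_eq {V Q : Type*} [Fintype V] [DecidableEq V] [AddCommGroup Q]
    {σ : Equiv.Perm V} {A : Finset V} (h : IsOddCyclePair σ A) {q : V → Q}
    (hq : ∀ v, q v + q (σ v) = 0) (hsum : ∑ v, q v = 0) :
    ∃ a, 2 • a = 0 ∧ ∀ v, q v = a := by
  obtain ⟨n, hn, hσ⟩ := h.exists_odd_pow_eq_one
  have htwo := two_nsmul_eq_zero_of_add_apply_eq_zero hq hn hσ
  have hinv (v) (j : ℕ) : q ((σ ^ j) v) = q v := by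
    induction j with
    | zero => simp
    | succ j ih =>
      rw [pow_succ', Equiv.Perm.mul_apply, ← ih]
      have h₁ := hq ((σ ^ j) v)
      have h₂ := htwo ((σ ^ j) v)
      rw [two_nsmul, ← h₁] at h₂
      exact (add_left_cancel h₂).symm
  have hconst (u v) (huv : u ∈ A ↔ v ∈ A) : q v = q u := by
    obtain ⟨j, rfl⟩ := h.exists_pow_apply_eq u v huv
    exact hinv u j
  have hodd {s : Finset V} {u : V} (hs : Odd s.card) (hu : ∀ v ∈ s, q v = q u) :
      ∑ v ∈ s, q v = q u := by
    obtain ⟨r, hr⟩ := hs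
    rw [Finset.sum_congr rfl hu, Finset.sum_const, hr, succ_nsmul, mul_nsmul, htwo]
    simp
  obtain ⟨a, ha⟩ := Finset.card_pos.1 h.odd_card.pos
  obtain ⟨b, hb⟩ := Finset.card_pos.1 h.odd_card_compl.pos
  rw [Finset.mem_compl] at hb
  rw [← Finset.sum_add_sum_compl A, hodd (u := a) h.odd_card fun v hv => hconst _ _ (by simp [*]),
    hodd (u := b) h.odd_card_compl fun v hv => hconst _ _ (by simp_all)] at hsum
  have hab : q b = q a := by
    have := htwo a
    rw [two_nsmul, ← hsum] at this
    exact (add_left_cancel this).symm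
  refine ⟨q a, htwo a, fun v => ?_⟩
  by_cases hv : v ∈ A
  · exact hconst _ _ (by simp [*])
  · rw [← hab]
    exact hconst _ _ (by simp [*])

theorem IsOddCyclePair.integral_or_half_integral {V : Type*} [Fintype V] [DecidableEq V]
    {σ : Equiv.Perm V} {A : Finset V} (h : IsOddCyclePair σ A) {f : V → ℝ} {x : V → ℤ} {t : ℤ}
    (hx : ∀ v, f v + f (σ v) = x v) (hsum : ∑ v, f v = t) :
    (∃ z : V → ℤ, ∀ v, f v = z v) ∨ ∃ z : V → ℤ, ∀ v, f v = z v + 1 / 2 := by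
  have hint (z : ℤ) : ((z : ℝ) : AddCircle (1 : ℝ)) = 0 :=
    (AddCircle.coe_eq_zero_iff 1).2 ⟨z, by simp⟩
  obtain ⟨a, ha, hfa⟩ := h.exists_forall_eq (q := fun v => (f v : AddCircle (1 : ℝ)))
    (fun v => by rw [← AddCircle.coe_add, hx, hint])
    (by
      have := map_sum (QuotientAddGroup.mk' (AddSubgroup.zmultiples (1 : ℝ))) f Finset.univ
      rw [hsum] at this
      exact this.symm.trans (hint t))
  obtain ⟨u, -⟩ := Finset.card_pos.1 h.odd_card.pos
  have hdiff (v) : ∃ n : ℤ, f v = f u + n := by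
    have : ((f v - f u : ℝ) : AddCircle (1 : ℝ)) = 0 := by
      rw [AddCircle.coe_sub, hfa, hfa, sub_self]
    obtain ⟨n, hn⟩ := (AddCircle.coe_eq_zero_iff 1).1 this
    exact ⟨n, by simp at hn; linarith⟩
  choose n hn using hdiff
  obtain ⟨z, hz⟩ : ∃ z : ℤ, 2 * f u = z := by
    rw [← hfa u, ← AddCircle.coe_nsmul] at ha
    obtain ⟨n, hn⟩ := (AddCircle.coe_eq_zero_iff 1).1 ha
    exact ⟨n, by simp at hn; linarith⟩
  rcases Int.even_or_odd' z with ⟨c, rfl | rfl⟩ <;> push_cast at hz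
  · exact .inl ⟨fun v => c + n v, fun v => by rw [hn]; push_cast; linarith⟩
  · exact .inr ⟨fun v => c + n v, fun v => by rw [hn]; push_cast; linarith⟩

/-- The map sending edge weights to vertex weights, where the edge `{v, σ⁻¹ v}` is indexed
by `v`. -/
noncomputable def vertexWeights {V : Type*} (σ : Equiv.Perm V) : (V → ℝ) →ₗ[ℝ] (V → ℝ) :=
  LinearMap.id + LinearMap.funLeft ℝ ℝ σ

@[simp]
theorem vertexWeights_apply {V : Type*} (σ : Equiv.Perm V) (f : V → ℝ) (v : V) :
    vertexWeights σ f v = f v + f (σ v) := rfl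

theorem IsOddCyclePair.vertexWeights_injective {V : Type*} [Fintype V] [DecidableEq V]
    {σ : Equiv.Perm V} {A : Finset V} (h : IsOddCyclePair σ A) :
    Function.Injective (vertexWeights σ) := by
  rw [← LinearMap.ker_eq_bot, LinearMap.ker_eq_bot']
  intro f hf
  obtain ⟨n, hn, hσ⟩ := h.exists_odd_pow_eq_one
  ext v
  simpa using two_nsmul_eq_zero_of_add_apply_eq_zero (q := f) (fun v => congrFun hf v) hn hσ v

theorem vertexWeights_single {N : ℕ} {σ : Equiv.Perm (Fin N)} {v : Fin N} (hv : σ.symm v ≠ v) :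
    vertexWeights σ (Pi.single v 1) = rho s(v, σ.symm v) := by
  have hv' : σ v ≠ v := fun h => hv (by rw [Equiv.symm_apply_eq, h])
  ext u
  simp only [vertexWeights_apply, rho, Pi.single_apply, Sym2.mem_iff, Equiv.eq_symm_apply]
  by_cases h₁ : u = v
  · subst h₁; simp [hv']
  · simp [h₁]

section

variable {N : ℕ} {G : SimpleGraph (Fin N)} {σ : Equiv.Perm (Fin N)} {A : Finset (Fin N)}

theorem rho_image_edgeSet (hG : G.edgeSet = Set.range fun v => s(v, σ.symm v)) :
    rho '' G.edgeSet = Set.range fun v => vertexWeights σ (Pi.single v 1) := by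
  rw [hG, ← Set.range_comp]
  congr 1
  ext1 v
  have : s(v, σ.symm v) ∈ G.edgeSet := hG ▸ ⟨v, rfl⟩
  exact (vertexWeights_single (G.ne_of_adj this).symm).symm

theorem edgePolytope_eq_image_stdSimplex
    (hG : G.edgeSet = Set.range fun v => s(v, σ.symm v)) :
    edgePolytope G = vertexWeights σ '' stdSimplex ℝ (Fin N) := by
  rw [edgePolytope, rho_image_edgeSet hG, ← convexHull_rangle_single_eq_stdSimplex,
    LinearMap.image_convexHull, ← Set.range_comp]
  rfl

theorem polyDim_edgePolytope (hG : G.edgeSet = Set.range fun v => s(v, σ.symm v))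
    (h : IsOddCyclePair σ A) : polyDim (edgePolytope G) = N - 1 := by
  have hN : 0 < N := by
    obtain ⟨u, -⟩ := Finset.card_pos.1 h.odd_card.pos
    exact u.pos
  have hli : LinearIndependent ℝ fun v => vertexWeights σ (Pi.single v 1) :=
    (Pi.linearIndependent_single_one (Fin N) ℝ).map' _
      (LinearMap.ker_eq_bot.2 h.vertexWeights_injective)
  rw [polyDim, edgePolytope, affineSpan_convexHull, direction_affineSpan, rho_image_edgeSet hG]
  exact hli.affineIndependent.finrank_vectorSpan (by simp; omega)

theorem vertexWeights_mem_smul_edgePolytope_iff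
    (hG : G.edgeSet = Set.range fun v => s(v, σ.symm v)) (h : IsOddCyclePair σ A)
    {t : ℝ} (ht : 0 < t) {f : Fin N → ℝ} :
    vertexWeights σ f ∈ t • edgePolytope G ↔ (∀ v, 0 ≤ f v) ∧ ∑ v, f v = t := by
  rw [Set.mem_smul_set_iff_inv_smul_mem₀ ht.ne', edgePolytope_eq_image_stdSimplex hG,
    ← map_smul, h.vertexWeights_injective.mem_set_image]
  simp only [stdSimplex, Set.mem_ofPred_eq, Pi.smul_apply, smul_eq_mul, ← Finset.mul_sum]
  have : 0 < t⁻¹ := by positivity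
  simp only [mul_nonneg_iff_of_pos_left this, inv_mul_eq_one₀ ht.ne', eq_comm]

theorem one_mem_intrinsicInterior (hG : G.edgeSet = Set.range fun v => s(v, σ.symm v))
    (h : IsOddCyclePair σ A) {m : ℕ} (hm : 0 < m) (hN : N = 2 * m) :
    (fun _ => (1 : ℝ)) ∈ intrinsicInterior ℝ ((m : ℝ) • edgePolytope G) := by
  have hm' : (0 : ℝ) < m := by exact_mod_cast hm
  let T : (Fin N → ℝ) ≃ₗ[ℝ] (Fin N → ℝ) :=
    LinearEquiv.ofInjectiveEndo _ h.vertexWeights_injective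
  have hT (f) : T f = vertexWeights σ f := rfl
  have hone : T (fun _ => 1 / 2) = fun _ => 1 := by
    ext v
    simp only [hT, vertexWeights_apply]
    norm_num
  have hmem : (fun _ => (1 : ℝ)) ∈ (m : ℝ) • edgePolytope G := by
    rw [← hone, hT, vertexWeights_mem_smul_edgePolytope_iff hG h hm']
    refine ⟨fun _ => by norm_num, ?_⟩
    simp [hN]
    ring
  have hspan : ∀ x ∈ affineSpan ℝ ((m : ℝ) • edgePolytope G), ∑ v, T.symm x v = m := by
    let S : (Fin N → ℝ) →ₗ[ℝ] ℝ := (∑ v, LinearMap.proj v) ∘ₗ T.symm.toLinearMap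
    have hS (x) : S x = ∑ v, T.symm x v := by simp [S]
    intro x hx
    rw [← hS]
    refine affineSpan_induction (p := fun x => S x = m) hx (fun y hy => ?_) ?_
    · obtain ⟨f, rfl⟩ := T.surjective y
      rw [hT, vertexWeights_mem_smul_edgePolytope_iff hG h hm'] at hy
      rw [hS, LinearEquiv.symm_apply_apply, hy.2]
    · intro c u v w hu hv hw
      simp [hu, hv, hw]
  have hcont : Continuous T.symm := LinearMap.continuous_of_finiteDimensional T.symm.toLinearMap
  refine mem_intrinsicInterior.2 ⟨⟨_, subset_affineSpan ℝ _ hmem⟩, ?_, rfl⟩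
  rw [mem_interior]
  refine ⟨{x | ∀ v, 0 < T.symm x v}, ?_, ?_, ?_⟩
  · rintro ⟨x, hx⟩ hpos
    have := hspan x hx
    obtain ⟨f, rfl⟩ := T.surjective x
    simp only [Set.mem_ofPred_eq, LinearEquiv.symm_apply_apply] at hpos this
    exact (vertexWeights_mem_smul_edgePolytope_iff hG h hm').2 ⟨fun v => (hpos v).le, this⟩
  · simp only [Set.ofPred_forall]
    refine isOpen_iInter_of_finite fun v => isOpen_lt continuous_const ?_
    exact (continuous_apply v).comp (hcont.comp continuous_subtype_val)
  · simp [← hone]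

/-- The lattice points of the `t`-th dilation have either all edge weights in `ℕ`, or all edge
weights in `ℕ + 1 / 2`. -/
theorem card_lattice_points_smul_edgePolytope
    (hG : G.edgeSet = Set.range fun v => s(v, σ.symm v)) (h : IsOddCyclePair σ A)
    {m : ℕ} (hN : N = 2 * m) {t : ℕ} (ht : 0 < t) :
    Nat.card {x : Fin N → ℤ // (fun i => (x i : ℝ)) ∈ (t : ℝ) • edgePolytope G} =
      Nat.card {a : Fin N → ℕ // ∑ v, a v = t} +
      Nat.card {a : Fin N → ℕ // ∑ v, a v + m = t} := by
  have ht' : (0 : ℝ) < t := by exact_mod_cast ht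
  have hfin (t : ℕ) : Finite {a : Fin N → ℕ // ∑ v, a v = t} :=
    Finite.of_equiv _ (Sym.equivNatSumOfFintype (Fin N) t)
  have hfin' : Finite {a : Fin N → ℕ // ∑ v, a v + m = t} :=
    Finite.of_injective (β := {a : Fin N → ℕ // ∑ v, a v = t - m})
      (fun a => ⟨a.1, by have := a.2; omega⟩) fun a b hab => by
        simpa [Subtype.ext_iff] using hab
  have hcast₁ (a : Fin N → ℕ) : (fun v => (((a v + a (σ v) : ℕ) : ℤ) : ℝ)) =
      vertexWeights σ fun v => (a v : ℝ) := by
    ext v; simp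
  have hcast₂ (a : Fin N → ℕ) : (fun v => (((a v + a (σ v) + 1 : ℕ) : ℤ) : ℝ)) =
      vertexWeights σ fun v => (a v : ℝ) + 1 / 2 := by
    ext v; simp; ring
  let F : {a : Fin N → ℕ // ∑ v, a v = t} ⊕ {a : Fin N → ℕ // ∑ v, a v + m = t} →
      {x : Fin N → ℤ // (fun i => (x i : ℝ)) ∈ (t : ℝ) • edgePolytope G} :=
    Sum.elim
      (fun a => ⟨fun v => (a.1 v + a.1 (σ v) : ℕ), by
        rw [hcast₁, vertexWeights_mem_smul_edgePolytope_iff hG h ht']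
        exact ⟨fun v => by positivity, by exact_mod_cast a.2⟩⟩)
      (fun a => ⟨fun v => (a.1 v + a.1 (σ v) + 1 : ℕ), by
        rw [hcast₂, vertexWeights_mem_smul_edgePolytope_iff hG h ht']
        refine ⟨fun v => by positivity, ?_⟩
        have ha : (∑ v, (a.1 v : ℝ)) + m = t := by exact_mod_cast a.2
        rw [Finset.sum_add_distrib, ← ha]
        simp [hN]
        ring⟩)
  let W : {a : Fin N → ℕ // ∑ v, a v = t} ⊕ {a : Fin N → ℕ // ∑ v, a v + m = t} → Fin N → ℝ :=
    Sum.elim (fun a v => a.1 v) (fun a v => a.1 v + 1 / 2)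
  have hFW (s) : (fun v => ((F s).1 v : ℝ)) = vertexWeights σ (W s) := by
    rcases s with a | a
    · exact hcast₁ a
    · exact hcast₂ a
  have hbij : Function.Bijective F := by
    constructor
    · intro s s' hs
      have hW : W s = W s' := h.vertexWeights_injective (by rw [← hFW, ← hFW, hs])
      obtain ⟨u, -⟩ := Finset.card_pos.1 h.odd_card.pos
      have hhalf (a b : ℕ) : (a : ℝ) ≠ b + 1 / 2 := by
        intro hab
        have : 2 * a = 2 * b + 1 := by
          rify
          linarith
        omega
      rcases s with a | a <;> rcases s' with b | b
      · congr 1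
        ext v
        simpa [W] using congrFun hW v
      · exact (hhalf _ _ (congrFun hW u)).elim
      · exact (hhalf _ _ (congrFun hW u).symm).elim
      · congr 1
        ext v
        simpa [W] using congrFun hW v
    · rintro ⟨x, hx⟩
      obtain ⟨f, hf⟩ := (LinearMap.injective_iff_surjective.1 h.vertexWeights_injective)
        fun v => (x v : ℝ)
      have hx' := hx
      rw [← hf, vertexWeights_mem_smul_edgePolytope_iff hG h ht'] at hx'
      suffices ∃ s, W s = f by
        obtain ⟨s, hs⟩ := this
        refine ⟨s, Subtype.ext (funext fun v => ?_)⟩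
        have := congrFun (hFW s) v
        rw [hs, hf] at this
        exact Int.cast_injective this
      obtain ⟨hpos, hsum⟩ := hx'
      rcases h.integral_or_half_integral (f := f) (t := t) (fun v => congrFun hf v) (by simpa using hsum)
        with ⟨z, hz⟩ | ⟨z, hz⟩
      · have hz0 (v) : 0 ≤ z v := by exact_mod_cast (hz v) ▸ hpos v
        lift z to Fin N → ℕ using hz0
        simp only [Int.cast_natCast] at hz
        refine ⟨.inl ⟨z, ?_⟩, funext fun v => (hz v).symm⟩
        simp only [hz] at hsum
        exact_mod_cast hsum
      · have hz0 (v) : 0 ≤ z v := by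
          have := hpos v
          rw [hz] at this
          have : 0 ≤ 2 * z v + 1 := by
            rify
            linarith
          omega
        lift z to Fin N → ℕ using hz0
        simp only [Int.cast_natCast] at hz
        refine ⟨.inr ⟨z, ?_⟩, funext fun v => (hz v).symm⟩
        simp only [hz, Finset.sum_add_distrib] at hsum
        simp [hN] at hsum
        rify
        linarith
  rw [← Nat.card_sum]
  exact (Nat.card_congr (Equiv.ofBijective F hbij)).symm

theorem card_sum_eq_choose (d t : ℕ) :
    Nat.card {a : Fin (d + 1) → ℕ // ∑ v, a v = t} = (d + t).choose d := by
  rw [← Nat.card_congr (Sym.equivNatSumOfFintype (Fin (d + 1)) t), Nat.card_eq_fintype_card,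
    Sym.card_sym_eq_choose, Fintype.card_fin, show d + 1 + t - 1 = d + t by omega,
    Nat.choose_symm_add]

theorem ehr_edgePolytope (hG : G.edgeSet = Set.range fun v => s(v, σ.symm v))
    (h : IsOddCyclePair σ A) {d m : ℕ} (hm : 0 < m) (hN : N = 2 * m) (hd : N = d + 1) (t : ℕ) :
    ehr (edgePolytope G) t =
      (d + t).choose d + if m ≤ t then (d + (t - m)).choose d else 0 := by
  rcases Nat.eq_zero_or_pos t with rfl | ht
  · simp [ehr, hm.ne']
  rw [ehr, if_neg ht.ne', card_lattice_points_smul_edgePolytope hG h hN ht]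
  subst hd
  rw [card_sum_eq_choose]
  congr 1
  split_ifs with hmt
  · rw [← card_sum_eq_choose]
    exact Nat.card_congr (Equiv.subtypeEquivRight fun a => by omega)
  · have : IsEmpty {a : Fin (d + 1) → ℕ // ∑ v, a v + m = t} := ⟨fun a => by have := a.2; omega⟩
    exact Nat.card_of_isEmpty

theorem PowerSeries.coeff_one_sub_X_pow (n j : ℕ) :
    PowerSeries.coeff j ((1 - PowerSeries.X : PowerSeries ℤ) ^ n) = (-1) ^ j * n.choose j := by
  have h₁ : (1 - PowerSeries.X : PowerSeries ℤ) = PowerSeries.rescale (-1) (1 + PowerSeries.X) := by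
    simp [sub_eq_add_neg]
  have h₂ : (1 + PowerSeries.X : PowerSeries ℤ) ^ n =
      ((1 + Polynomial.X) ^ n : Polynomial ℤ) := by
    simp
  rw [h₁, ← map_pow, PowerSeries.coeff_rescale, h₂, Polynomial.coeff_coe,
    Polynomial.coeff_one_add_X_pow]

theorem deltaCoeff_eq_coeff (P : Set (Fin N → ℝ)) (i : ℕ) :
    deltaCoeff P i = PowerSeries.coeff i
      ((1 - PowerSeries.X) ^ (polyDim P + 1) * PowerSeries.mk fun t => (ehr P t : ℤ)) := by
  rw [PowerSeries.coeff_mul, Finset.Nat.sum_antidiagonal_eq_sum_range_succ_mk, deltaCoeff]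
  simp [PowerSeries.coeff_one_sub_X_pow]

theorem deltaCoeff_edgePolytope (hG : G.edgeSet = Set.range fun v => s(v, σ.symm v))
    (h : IsOddCyclePair σ A) {m : ℕ} (hm : 0 < m) (hN : N = 2 * m) (i : ℕ) :
    deltaCoeff (edgePolytope G) i = (if i = 0 then 1 else 0) + if i = m then 1 else 0 := by
  obtain ⟨d, hd⟩ : ∃ d, N = d + 1 := ⟨N - 1, by omega⟩
  have hser : (PowerSeries.mk fun t => (ehr (edgePolytope G) t : ℤ)) =
      (PowerSeries.mk fun t => ((d + t).choose d : ℤ)) * (1 + PowerSeries.X ^ m) := by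
    ext t
    rw [mul_add, mul_one, map_add, PowerSeries.coeff_mul_X_pow', PowerSeries.coeff_mk,
      PowerSeries.coeff_mk, PowerSeries.coeff_mk, ehr_edgePolytope hG h hm hN hd]
    push_cast
    rfl
  rw [deltaCoeff_eq_coeff, polyDim_edgePolytope hG h, show N - 1 + 1 = d + 1 by omega, hser, ← mul_assoc,
    mul_comm (_ ^ _), PowerSeries.mk_add_choose_mul_one_sub_pow_eq_one, one_mul, map_add,
    PowerSeries.coeff_one, PowerSeries.coeff_X_pow]

theorem polyDeg_edgePolytope (hG : G.edgeSet = Set.range fun v => s(v, σ.symm v))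
    (h : IsOddCyclePair σ A) {m : ℕ} (hm : 0 < m) (hN : N = 2 * m) :
    polyDeg (edgePolytope G) = m := by
  refine IsGreatest.csSup_eq ⟨?_, fun i hi => ?_⟩
  · simp [deltaCoeff_edgePolytope hG h hm hN, hm.ne']
  · by_contra! hlt
    refine hi ?_
    rw [deltaCoeff_edgePolytope hG h hm hN, if_neg (by omega), if_neg (by omega), add_zero]

end

/-- Let `G` be the vertex-disjoint union of a cycle of length `2k+1`
and a cycle of length `2ℓ+1` on `2k+2ℓ+2` vertices, and let `C ⊂ ℝ^{2k+2ℓ+2}` be the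
convex hull of the vectors `ρ(e)`, `e ∈ E(G)`.  Then `dim C = 2k+2ℓ+1`, the all-ones
vector lies in the relative interior of `(k+ℓ+1)C`, so `codeg(C) ≤ k+ℓ+1` and hence
`deg(C) ≥ k+ℓ+1`. -/
theorem disjoint_odd_cycles_polytope
    (k l : ℕ) (hk : 1 ≤ k) (hl : 1 ≤ l)
    (G : SimpleGraph (Fin (2 * k + 2 * l + 2)))
    {v w : Fin (2 * k + 2 * l + 2)} (c₁ : G.Walk v v) (c₂ : G.Walk w w)
    (hc₁ : c₁.IsCycle) (hc₂ : c₂.IsCycle)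
    (hlen₁ : c₁.length = 2 * k + 1) (hlen₂ : c₂.length = 2 * l + 1)
    (hdisj : ∀ x, x ∈ c₁.support → x ∉ c₂.support)
    (hcover : ∀ x, x ∈ c₁.support ∨ x ∈ c₂.support)
    (hedge : G.edgeSet = {e | e ∈ c₁.edges} ∪ {e | e ∈ c₂.edges}) :
    polyDim (edgePolytope G) = 2 * k + 2 * l + 1 ∧
    (fun _ => (1 : ℝ)) ∈
      intrinsicInterior ℝ (((k + l + 1 : ℕ) : ℝ) • edgePolytope G) ∧
    polyDim (edgePolytope G) + 1 - polyDeg (edgePolytope G) ≤ k + l + 1 ∧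
    k + l + 1 ≤ polyDeg (edgePolytope G) := by
  obtain ⟨σ, A, h, hG⟩ := exists_isOddCyclePair hc₁ hc₂ hlen₁ hlen₂ hdisj hcover hedge
  have hN : 2 * k + 2 * l + 2 = 2 * (k + l + 1) := by ring
  have hdim := polyDim_edgePolytope hG h
  have hdeg := polyDeg_edgePolytope hG h (Nat.succ_pos (k + l)) hN
  exact ⟨by omega, one_mem_intrinsicInterior hG h (Nat.succ_pos (k + l)) hN, by omega, by omega⟩
end

section
/- Let G be a finite connected simple graph. If deg(P_G) ≤ 2, then any two odd cycles of G have a common vertex; in particular, G satisfies the odd cycle condition and the edge ring K[G] is Cohen–Macaulay (equivalently, normal). -/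
open MvPolynomial Pointwise

section MonomialAlgebra

variable {σ K : Type*} [Field K]

/-- If an arithmetic progression stays in a finitely generated submonoid, then a positive multiple
of its difference lies in the submonoid. -/
theorem AddSubmonoid.FG.exists_nsmul_mem {M : Type*} [AddCommMonoid M] [IsCancelAdd M]
    {S : AddSubmonoid M}
    (hS : S.FG) {d a : M} (h : ∀ n : ℕ, d + n • a ∈ S) : ∃ k : ℕ, 0 < k ∧ k • a ∈ S := by
  obtain ⟨T, rfl⟩ := hS
  have hrep : ∀ n : ℕ, ∃ f : T → ℕ, ∑ t, f t • (t : M) = d + n • a := by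
    intro n
    obtain ⟨f, hf⟩ := AddSubmonoid.mem_closure_finset'.1 (h n)
    exact ⟨f, hf.symm⟩
  choose f hf using hrep
  obtain ⟨m, n, hmn, hle⟩ := wellQuasiOrdered_le (α := T → ℕ) f
  refine ⟨n - m, by omega, ?_⟩
  have key : (n - m) • a = ∑ t : T, (f n t - f m t) • (t : M) := by
    have h1 : ∑ t, f m t • (t : M) + ∑ t : T, (f n t - f m t) • (t : M)
        = ∑ t, f m t • (t : M) + (n - m) • a := by
      rw [← Finset.sum_add_distrib, hf m, add_assoc, ← add_nsmul, Nat.add_sub_cancel' hmn.le, ← hf n]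
      refine Finset.sum_congr rfl fun t _ => ?_
      rw [← add_nsmul, Nat.add_sub_cancel' (hle t)]
    exact (add_left_cancel h1).symm
  rw [key]
  exact AddSubmonoid.sum_mem _ fun t _ => AddSubmonoid.nsmul_mem _ (AddSubmonoid.subset_closure t.2) _

/-- The algebra spanned by the monomials with exponents in a finitely generated saturated monoid is
integrally closed. -/
theorem isIntegrallyClosed_of_saturated [Finite σ] {S : AddSubmonoid (σ →₀ ℕ)} (hS : S.FG)
    (hsat : ∀ a ∈ S, ∀ b ∈ S, ∀ c, a + c = b → ∀ k : ℕ, 0 < k → k • c ∈ S → c ∈ S)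
    (A : Subalgebra K (MvPolynomial σ K))
    (hA : ∀ p, p ∈ A ↔ ∀ m ∈ p.support, m ∈ S) : IsIntegrallyClosed A := by
  classical
  let _ : LinearOrder σ := linearOrderOfSTO (WellOrderingRel (α := σ))
  let mo : MonomialOrder σ := MonomialOrder.lex
  have hdeg : ∀ p ∈ A, p ≠ 0 → mo.degree p ∈ S := fun p hp h0 =>
    (hA p).1 hp _ (mo.degree_mem_support h0)
  have hmon : ∀ m ∈ S, ∀ r : K, monomial m r ∈ A := fun m hm r => by
    rw [hA]
    intro m' hm'
    rw [Finset.mem_singleton.1 (support_monomial_subset hm')]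
    exact hm
  -- a polynomial which is almost integral over `A` lies in `A`
  have main : ∀ s : mo.syn, ∀ x : MvPolynomial σ K, mo.toSyn (mo.degree x) = s →
      (∃ g ∈ A, g ≠ 0 ∧ g * x ∈ A) → IsAlmostIntegral A x → x ∈ A := by
    intro s
    induction s using WellFoundedLT.induction with
    | ind s ih =>
    intro x hx hfrac hai
    by_cases hx0 : x = 0
    · rw [hx0]; exact zero_mem _
    have hlead : mo.degree x ∈ S := by
      obtain ⟨r, hr, hr'⟩ := hai
      have hr0 : (r : MvPolynomial σ K) ≠ 0 := by
        simpa using nonZeroDivisors.ne_zero hr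
      obtain ⟨k, hk, hk'⟩ := hS.exists_nsmul_mem (d := mo.degree (r : MvPolynomial σ K))
        (a := mo.degree x) (fun n => by
          obtain ⟨y, hy⟩ := hr' n
          have hy' : (r : MvPolynomial σ K) * x ^ n = y := hy.symm
          rw [← mo.degree_pow, ← mo.degree_mul hr0 (pow_ne_zero _ hx0), hy']
          refine hdeg _ y.2 ?_
          rw [← hy']
          exact mul_ne_zero hr0 (pow_ne_zero _ hx0))
      obtain ⟨g, hg, hg0, hgx⟩ := hfrac
      exact hsat _ (hdeg g hg hg0) _ (hdeg _ hgx (mul_ne_zero hg0 hx0)) _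
        (mo.degree_mul hg0 hx0).symm k hk hk'
    have hlt : mo.leadingTerm x ∈ A := hmon _ hlead _
    have hsub : x = (x - mo.leadingTerm x) + mo.leadingTerm x := by ring
    rw [hsub]
    refine add_mem ?_ hlt
    by_cases hsz : x - mo.leadingTerm x = 0
    · rw [hsz]; exact zero_mem _
    refine ih _ ?_ _ rfl ?_ ?_
    · rw [← hx]
      refine lt_of_le_of_ne ?_ ?_
      · refine mo.degree_sub_le.trans ?_
        rw [mo.degree_leadingTerm, sup_idem]
      · intro heq
        have heq' := mo.toSyn.injective heq
        have h1 := mo.degree_mem_support hsz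
        rw [heq', mem_support_iff, coeff_sub] at h1
        apply h1
        rw [MonomialOrder.leadingTerm, coeff_monomial, if_pos rfl]
        simp [MonomialOrder.leadingCoeff]
    · obtain ⟨g, hg, hg0, hgx⟩ := hfrac
      refine ⟨g, hg, hg0, ?_⟩
      rw [mul_sub]
      exact sub_mem hgx (mul_mem hg hlt)
    · rw [← mem_completeIntegralClosure] at hai ⊢
      exact sub_mem hai ((completeIntegralClosure A (MvPolynomial σ K)).algebraMap_mem ⟨_, hlt⟩)
  rw [isIntegrallyClosed_iff (FractionRing A)]
  intro x hx
  let L := FractionRing (MvPolynomial σ K)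
  have hinj : Function.Injective (algebraMap A L) := by
    rw [IsScalarTower.algebraMap_eq A (MvPolynomial σ K) L]
    exact (IsFractionRing.injective (MvPolynomial σ K) L).comp Subtype.val_injective
  let φ : FractionRing A →ₐ[A] L := IsFractionRing.liftAlgHom (g := Algebra.ofId A L) hinj
  have hφ : IsIntegral A (φ x) := hx.map φ
  have hR : IsIntegral (MvPolynomial σ K) (φ x) := hφ.tower_top
  obtain ⟨y, hy⟩ := IsIntegrallyClosed.isIntegral_iff.1 hR
  obtain ⟨r, hr, hr'⟩ := hx.isAlmostIntegral
  have hr0 : (r : MvPolynomial σ K) ≠ 0 := by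
    simpa using nonZeroDivisors.ne_zero hr
  have hpow : ∀ n, ∃ z : A, (r : MvPolynomial σ K) * y ^ n = z := by
    intro n
    obtain ⟨z, hz⟩ := hr' n
    refine ⟨z, IsFractionRing.injective (MvPolynomial σ K) L ?_⟩
    have := congrArg φ hz
    simp only [map_smul, map_pow, ← hy] at this
    rw [AlgHom.commutes, Algebra.smul_def] at this
    rw [map_mul, map_pow]
    exact this.symm
  have hyA : y ∈ A := by
    refine main _ y rfl ⟨r, r.2, hr0, ?_⟩ ⟨r, hr, fun n => ?_⟩
    · obtain ⟨z, hz⟩ := hpow 1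
      rw [pow_one] at hz
      rw [hz]; exact z.2
    · obtain ⟨z, hz⟩ := hpow n
      exact ⟨z, hz.symm⟩
  refine ⟨⟨y, hyA⟩, φ.toRingHom.injective ?_⟩
  change φ (algebraMap A _ ⟨y, hyA⟩) = φ x
  rw [AlgHom.commutes, ← hy]
  rfl

end MonomialAlgebra

section OddCycles

variable {V : Type*} {G : SimpleGraph V}

/-- A graph with an odd closed walk contains an odd cycle. -/
theorem SimpleGraph.exists_odd_isCycle_of_odd_loop : ∀ (n : ℕ) {u : V} (w : G.Walk u u),
    w.length = n → Odd n → ∃ (v : V) (c : G.Walk v v), c.IsCycle ∧ Odd c.length := by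
  intro n
  induction n using Nat.strong_induction_on with
  | h n ih =>
  intro u w hw hn
  by_cases hc : w.IsCycle
  · exact ⟨u, w, hc, hw ▸ hn⟩
  cases w with
  | nil => simp at hw; subst hw; simp at hn
  | @cons _ v _ h p =>
  rw [SimpleGraph.Walk.length_cons] at hw
  have h3 : 3 ≤ p.length + 1 := by
    by_contra hlt
    have hp0 : p.length = 0 := by
      rcases hn with ⟨k, hk⟩; omega
    exact h.ne (SimpleGraph.Walk.eq_of_length_eq_zero hp0).symm
  have hnp : ¬ p.IsPath := by
    intro hp
    apply hc
    rw [SimpleGraph.Walk.isCycle_iff_isPath_tail_and_le_length]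
    simpa [h3] using hp
  rw [SimpleGraph.Walk.isPath_iff_isSubwalk_imp_nil] at hnp
  push Not at hnp
  obtain ⟨x, c, hsub, hcyc⟩ := hnp
  have hpos : 0 < c.length := by
    rw [← SimpleGraph.Walk.length_eq_zero_iff] at hcyc
    omega
  obtain ⟨r, s, hrs⟩ := hsub
  have hl := congrArg SimpleGraph.Walk.length hrs
  simp only [SimpleGraph.Walk.length_append] at hl
  rcases Nat.even_or_odd c.length with he | ho
  · refine ih (n - c.length) (by omega) (SimpleGraph.Walk.cons h (r.append s)) ?_ ?_
    · simp only [SimpleGraph.Walk.length_cons, SimpleGraph.Walk.length_append]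
      omega
    · exact Nat.Odd.sub_even (by omega) hn he
  · exact ih c.length (by omega) c rfl ho

/-- A graph without odd cycles is two-colourable. -/
theorem SimpleGraph.colorable_two_of_forall_isCycle_even
    (h : ∀ (v : V) (c : G.Walk v v), c.IsCycle → Even c.length) : G.Colorable 2 := by
  rw [SimpleGraph.two_colorable_iff_forall_loop_even]
  intro u w
  by_contra ho
  rw [Nat.not_even_iff_odd] at ho
  obtain ⟨v, c, hc, hco⟩ := SimpleGraph.exists_odd_isCycle_of_odd_loop _ w rfl ho
  exact (Nat.not_even_iff_odd.2 hco) (h v c hc)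

end OddCycles

/-- The number of vertices of a cycle is its length. -/
theorem SimpleGraph.Walk.IsCycle.card_toFinset_support {V : Type*} [DecidableEq V]
    {G : SimpleGraph V} {v : V} {c : G.Walk v v} (hc : c.IsCycle) :
    c.support.toFinset.card = c.length := by
  have h1 : c.support.toFinset = c.support.tail.toFinset := by
    rw [← c.cons_tail_support, List.toFinset_cons, List.tail_cons]
    refine Finset.insert_eq_of_mem (List.mem_toFinset.2 ?_)
    exact c.end_mem_tail_support hc.not_nil
  rw [h1, List.toFinset_card_of_nodup hc.support_nodup, List.length_tail, c.length_support]
  rfl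

theorem rho_mk_apply {N : ℕ} {a b : Fin N} (hab : a ≠ b) (i : Fin N) :
    rho s(a, b) i = (if i = a then 1 else 0) + (if i = b then 1 else 0) := by
  simp only [rho, Sym2.mem_iff]
  grind

theorem sum_mul_rho_mk {N : ℕ} (f : Fin N → ℝ) {a b : Fin N} (hab : a ≠ b) :
    ∑ i, f i * rho s(a, b) i = f a + f b := by
  simp [rho_mk_apply hab, mul_add, Finset.sum_add_distrib]

theorem sum_rho {N : ℕ} {e : Sym2 (Fin N)} (he : ¬ e.IsDiag) : ∑ i, rho e i = 2 := by
  induction e with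
  | _ a b =>
  have := sum_mul_rho_mk (fun _ => (1 : ℝ)) (a := a) (b := b) (by simpa using he)
  simp only [one_mul] at this
  rw [this]; norm_num

section Fractional

variable {N : ℕ} {G : SimpleGraph (Fin N)}

open Classical in
/-- If any two odd cycles meet, there is no nonempty linearly independent set of edges carrying
weights strictly between `0` and `1` with integral vertex sums and integral total. -/
theorem eq_empty_of_fractional
    (hodd : ∀ (v w : Fin N) (c₁ : G.Walk v v) (c₂ : G.Walk w w),
      c₁.IsCycle → c₂.IsCycle → Odd c₁.length → Odd c₂.length →
        ∃ x, x ∈ c₁.support ∧ x ∈ c₂.support)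
    {F : Finset (Sym2 (Fin N))} (hFG : ∀ e ∈ F, e ∈ G.edgeSet)
    (hind : LinearIndependent ℝ (fun e : F => rho (e : Sym2 (Fin N))))
    {r : Sym2 (Fin N) → ℝ} (hr : ∀ e ∈ F, 0 < r e ∧ r e < 1)
    {c : Fin N → ℤ} (hc : ∀ i, ∑ e ∈ F, r e * rho e i = c i)
    {m : ℤ} (hm : ∑ e ∈ F, r e = m) : F = ∅ := by
  have hdiag : ∀ e ∈ F, ¬ e.IsDiag := fun e he => G.not_isDiag_of_mem_edgeSet (hFG e he)
  set H : SimpleGraph (Fin N) := SimpleGraph.fromEdgeSet (F : Set (Sym2 (Fin N))) with hH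
  have hHG : H ≤ G := by
    intro a b hab
    rw [hH, SimpleGraph.fromEdgeSet_adj] at hab
    exact hFG _ hab.1
  have hHF : H.edgeFinset = F := by
    ext e
    rw [SimpleGraph.mem_edgeFinset, hH, SimpleGraph.edgeSet_fromEdgeSet]
    exact ⟨fun h => h.1, fun h => ⟨h, hdiag e h⟩⟩
  have hinc : ∀ i, H.incidenceFinset i = F.filter (fun e => i ∈ e) := by
    intro i
    rw [SimpleGraph.incidenceFinset_eq_filter, hHF]
  have hsum : ∀ i, ∑ e ∈ H.incidenceFinset i, r e = c i := by
    intro i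
    rw [hinc, Finset.sum_filter, ← hc i]
    refine Finset.sum_congr rfl fun e _ => ?_
    simp [rho]
  let X : Finset (Fin N) := Finset.univ.filter (fun i => H.degree i ≠ 0)
  have hX : ∀ i, i ∈ X ↔ H.degree i ≠ 0 := fun i => by simp [X]
  have hXadj : ∀ {i j}, H.Adj i j → i ∈ X := fun {i j} hij => by
    rw [hX, Ne, ← SimpleGraph.card_neighborFinset_eq_degree, Finset.card_eq_zero]
    exact Finset.ne_empty_of_mem (by simpa using hij : j ∈ H.neighborFinset i)
  have hrhoX : ∀ e ∈ F, ∀ i ∉ X, rho e i = 0 := by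
    intro e he i hi
    rw [hX, not_not, ← SimpleGraph.card_incidenceFinset_eq_degree, Finset.card_eq_zero, hinc] at hi
    have : i ∉ e := fun hie => by
      have : e ∈ F.filter (fun e => i ∈ e) := Finset.mem_filter.2 ⟨he, hie⟩
      rw [hi] at this
      simp at this
    simp [rho, this]
  have hdeg2 : ∀ i ∈ X, 2 ≤ H.degree i := by
    intro i hi
    by_contra hlt
    have h1 : H.degree i = 1 := by
      have := (hX i).1 hi
      omega
    rw [← SimpleGraph.card_incidenceFinset_eq_degree, Finset.card_eq_one] at h1
    obtain ⟨e, he⟩ := h1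
    have heF : e ∈ F := by
      have : e ∈ H.incidenceFinset i := by simp [he]
      rw [hinc] at this
      exact (Finset.mem_filter.1 this).1
    have hs := hsum i
    rw [he, Finset.sum_singleton] at hs
    obtain ⟨h0, h1⟩ := hr e heF
    rw [hs] at h0 h1
    have h0' : 0 < c i := by exact_mod_cast h0
    have h1' : c i < 1 := by exact_mod_cast h1
    omega
  have hind' : LinearIndependent ℝ (fun e : F => fun x : X => rho (e : Sym2 (Fin N)) x) := by
    rw [Fintype.linearIndependent_iff] at hind ⊢
    intro g hg
    apply hind
    funext i
    by_cases hi : i ∈ X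
    · simpa using congrFun hg ⟨i, hi⟩
    · rw [Finset.sum_apply]
      refine Finset.sum_eq_zero fun e _ => ?_
      simp [hrhoX e e.2 i hi]
  have hFX : F.card ≤ X.card := by
    simpa using hind'.fintype_card_le_finrank
  have hdegsum : ∑ i ∈ X, H.degree i = 2 * F.card := by
    have : ∑ i, H.degree i = 2 * F.card := by
      rw [← congrArg Finset.card hHF]
      convert H.sum_degrees_eq_twice_card_edges
    rw [← this]
    refine Finset.sum_subset (Finset.subset_univ _) fun i _ hi => ?_
    by_contra h
    exact hi ((hX i).2 h)
  have hXF : X.card ≤ F.card := by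
    have := Finset.card_nsmul_le_sum X (fun i => H.degree i) 2 hdeg2
    rw [hdegsum, smul_eq_mul] at this
    omega
  have hcard : F.card = X.card := le_antisymm hFX hXF
  have hdeg : ∀ i ∈ X, H.degree i = 2 := by
    have : ∑ i ∈ X, 2 = ∑ i ∈ X, H.degree i := by
      rw [hdegsum, Finset.sum_const, smul_eq_mul, hcard, mul_comm]
    intro i hi
    exact ((Finset.sum_eq_sum_iff_of_le hdeg2).1 this i hi).symm
  have hspan := hind'.span_eq_top_of_card_eq_finrank' (by simp [hcard])
  have hkill : ∀ s : Fin N → ℝ, (∀ i j, H.Adj i j → s i + s j = 0) → ∀ i ∈ X, s i = 0 := by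
    intro s hs i hi
    let φ : (X → ℝ) →ₗ[ℝ] ℝ := ∑ x : X, s x • LinearMap.proj x
    have hφ : φ = 0 := by
      apply LinearMap.ext_on_range hspan
      rintro ⟨e, he⟩
      have h1 : φ (fun x : X => rho e x) = ∑ i, s i * rho e i := by
        simp only [φ, LinearMap.sum_apply, LinearMap.smul_apply, LinearMap.proj_apply, smul_eq_mul]
        rw [Finset.sum_coe_sort X (fun i => s i * rho e i)]
        refine Finset.sum_subset (Finset.subset_univ _) fun i _ hi => ?_
        rw [hrhoX e he i hi, mul_zero]
      rw [h1, LinearMap.zero_apply]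
      induction e with
      | _ a b =>
      have hab : a ≠ b := by simpa using hdiag _ he
      rw [sum_mul_rho_mk s hab]
      exact hs a b (by rw [hH, SimpleGraph.fromEdgeSet_adj]; exact ⟨he, hab⟩)
    have := congrArg (fun ψ => ψ (Pi.single (⟨i, hi⟩ : X) 1)) hφ
    simpa [φ, Pi.single_apply] using this
  have hone : ∀ i ∈ X, c i = 1 := by
    intro i hi
    have hd := hdeg i hi
    rw [← SimpleGraph.card_incidenceFinset_eq_degree] at hd
    have hF : ∀ e ∈ H.incidenceFinset i, e ∈ F := fun e he => by
      rw [hinc] at he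
      exact (Finset.mem_filter.1 he).1
    have hne : (H.incidenceFinset i).Nonempty := Finset.card_pos.1 (by omega)
    have h0 : (0 : ℝ) < c i := by
      rw [← hsum i]
      exact Finset.sum_pos (fun e he => (hr e (hF e he)).1) hne
    have h2 : (c i : ℝ) < 2 := by
      rw [← hsum i]
      calc ∑ e ∈ H.incidenceFinset i, r e < ∑ e ∈ H.incidenceFinset i, (1 : ℝ) :=
            Finset.sum_lt_sum_of_nonempty hne fun e he => (hr e (hF e he)).2
        _ = 2 := by simp [hd]
    have h0' : 0 < c i := by exact_mod_cast h0
    have h2' : c i < 2 := by exact_mod_cast h2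
    omega
  have hczero : ∀ i ∉ X, c i = 0 := by
    intro i hi
    have := hc i
    rw [Finset.sum_eq_zero fun e he => by rw [hrhoX e he i hi, mul_zero]] at this
    exact_mod_cast this.symm
  have htotal : 2 * m = X.card := by
    have h1 : ∑ i, (c i : ℝ) = 2 * m := by
      simp_rw [← hc]
      rw [Finset.sum_comm, ← hm, Finset.mul_sum]
      refine Finset.sum_congr rfl fun e he => ?_
      rw [← Finset.mul_sum, sum_rho (hdiag e he), mul_comm]
    have h2 : ∑ i, c i = X.card := by
      rw [← Finset.sum_subset (Finset.subset_univ X) (fun i _ hi => hczero i hi),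
        Finset.sum_congr rfl hone]
      simp
    rw [← h2]
    exact_mod_cast h1.symm
  -- a set closed under adjacency with two-colourable complement contains `X`
  have hcover : ∀ W : Finset (Fin N), (∀ i j, H.Adj i j → i ∈ W → j ∈ W) →
      ∀ col : Fin N → Fin 2, (∀ i j, H.Adj i j → i ∉ W → j ∉ W → col i ≠ col j) → X ⊆ W := by
    intro W hW col hcol i hi
    by_contra hiW
    have := hkill (fun i => if i ∈ W then 0 else if col i = 0 then 1 else -1) (fun a b hab => by
      have h1 := hW a b hab
      have h2 := hW b a hab.symm
      have h3 := hcol a b hab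
      by_cases ha : a ∈ W
      · simp [ha, h1 ha]
      · have hb : b ∉ W := fun hb => ha (h2 hb)
        have h4 := h3 ha hb
        have : (col a = 0) ↔ ¬ (col b = 0) := by omega
        by_cases h5 : col b = 0
        · simp [ha, hb, h5, this]
        · simp [ha, hb, h5, this]) i hi
    simp only [if_neg hiW] at this
    split_ifs at this <;> norm_num at this
  by_cases hev : ∀ (v : Fin N) (w : H.Walk v v), w.IsCycle → Even w.length
  · obtain ⟨col⟩ := SimpleGraph.colorable_two_of_forall_isCycle_even hev
    have := hcover ∅ (by simp) col (fun i j hij _ _ => col.valid hij)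
    rw [Finset.subset_empty] at this
    rw [← Finset.card_eq_zero, hcard, this, Finset.card_empty]
  · exfalso
    push Not at hev
    obtain ⟨v, C, hC, hCo⟩ := hev
    rw [Nat.not_even_iff_odd] at hCo
    let W : Finset (Fin N) := C.support.toFinset
    have hWX : ∀ x ∈ W, x ∈ X := by
      intro x hx
      have h2 := hC.ncard_neighborSet_toSubgraph_eq_two (List.mem_toFinset.1 hx)
      obtain ⟨y, hy⟩ : (C.toSubgraph.neighborSet x).Nonempty :=
        Set.nonempty_of_ncard_ne_zero (by omega)
      exact hXadj hy.adj_sub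
    have hWcl : ∀ i j, H.Adj i j → i ∈ W → j ∈ W := by
      intro i j hij hi
      have h2 := hC.ncard_neighborSet_toSubgraph_eq_two (List.mem_toFinset.1 hi)
      have hsub : C.toSubgraph.neighborSet i ⊆ H.neighborSet i := C.toSubgraph.neighborSet_subset i
      have h3 : (H.neighborSet i).ncard = 2 := by
        rw [← hdeg i (hWX i hi), ← SimpleGraph.card_neighborSet_eq_degree,
          Set.ncard_eq_toFinset_card', Set.toFinset_card]
      have heq := Set.eq_of_subset_of_ncard_le hsub (by omega)
      have hj : j ∈ C.toSubgraph.neighborSet i := by rw [heq]; exact hij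
      have hjv : j ∈ C.toSubgraph.verts := C.toSubgraph.edge_vert hj.symm
      rw [SimpleGraph.Walk.mem_verts_toSubgraph] at hjv
      exact List.mem_toFinset.2 hjv
    let H' : SimpleGraph (Fin N) :=
      { Adj := fun i j => H.Adj i j ∧ i ∉ W ∧ j ∉ W
        symm := ⟨fun i j h => ⟨h.1.symm, h.2.2, h.2.1⟩⟩
        loopless := ⟨fun i h => H.loopless.irrefl i h.1⟩ }
    have hH' : H' ≤ H := fun i j h => h.1
    obtain ⟨col⟩ := SimpleGraph.colorable_two_of_forall_isCycle_even (G := H') (by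
      intro x D hD
      by_contra hDo
      rw [Nat.not_even_iff_odd] at hDo
      obtain ⟨y, hy1, hy2⟩ := hodd v x (C.mapLe hHG) (D.mapLe (hH'.trans hHG))
        (hC.mapLe _) (hD.mapLe _) (by simpa using hCo) (by simpa using hDo)
      have hy1' : y ∈ C.support := by simpa using hy1
      have hy2' : y ∈ D.support := by simpa using hy2
      have h2 := hD.ncard_neighborSet_toSubgraph_eq_two hy2'
      obtain ⟨z, hz⟩ : (D.toSubgraph.neighborSet y).Nonempty :=
        Set.nonempty_of_ncard_ne_zero (by omega)
      exact hz.adj_sub.2.1 (List.mem_toFinset.2 hy1'))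
    have hXW := hcover W hWcl col (fun i j hij hi hj => col.valid ⟨hij, hi, hj⟩)
    have hXeq : X = W := le_antisymm hXW hWX
    rw [hXeq, hC.card_toFinset_support] at htotal
    obtain ⟨k, hk⟩ := hCo
    omega

end Fractional

section Fractional

variable {N : ℕ} {G : SimpleGraph (Fin N)}

/-- A nonnegative weight with non-integral values along a dependency can be shifted along this
dependency so that it stays nonnegative, keeps integral values and gains a new one. -/
theorem exists_shift {E : Type*} [Fintype E] {q z : E → ℝ} (hq : ∀ e, 0 ≤ q e)
    (hz0 : z ≠ 0) :
    ∃ t : ℝ, (∀ e, 0 ≤ q e + t * z e) ∧ ∃ e, z e ≠ 0 ∧ Int.fract (q e + t * z e) = 0 := by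
  classical
  let τ : E → ℝ := fun e =>
    if 0 < z e then (⌊q e⌋ + 1 - q e) / z e else (q e - ⌊q e⌋) / (- z e)
  obtain ⟨e₀, he₀⟩ := Function.ne_iff.1 hz0
  obtain ⟨e₁, h1, hmin⟩ := Finset.exists_min_image (Finset.univ.filter (fun e => z e ≠ 0)) τ
    ⟨e₀, by simpa using he₀⟩
  simp only [Finset.mem_filter, Finset.mem_univ, true_and] at h1 hmin
  have hτpos : ∀ e, z e ≠ 0 → 0 ≤ τ e := by
    intro e he
    have h2 := Int.floor_le (q e)
    have h3 := Int.lt_floor_add_one (q e)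
    simp only [τ]
    split_ifs with h
    · exact div_nonneg (by linarith) h.le
    · exact div_nonneg (by linarith) (by linarith)
  refine ⟨τ e₁, fun e => ?_, e₁, h1, ?_⟩
  · by_cases he : z e = 0
    · simpa [he] using hq e
    have hfl : (0 : ℝ) ≤ ⌊q e⌋ := by exact_mod_cast Int.floor_nonneg.2 (hq e)
    rcases lt_or_gt_of_ne he with h | h
    · have h5 := hmin e he
      have h6 : τ e = (q e - ⌊q e⌋) / (- z e) := by simp [τ, not_lt.2 h.le]
      rw [h6, le_div_iff₀ (by linarith)] at h5
      linarith
    · have := mul_nonneg (hτpos e₁ h1) h.le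
      linarith [hq e]
  · rcases lt_or_gt_of_ne h1 with h | h
    · have h6 : q e₁ + τ e₁ * z e₁ = ⌊q e₁⌋ := by
        simp only [τ, not_lt.2 h.le, if_false]
        field_simp
        ring
      rw [h6, Int.fract_intCast]
    · have h6 : q e₁ + τ e₁ * z e₁ = ((⌊q e₁⌋ + 1 : ℤ) : ℝ) := by
        simp only [τ, h, if_true]
        push_cast
        field_simp
        ring
      rw [h6, Int.fract_intCast]

/-- If any two odd cycles of `G` meet, then an integral point of the edge cone at integral height is
a sum of edge vectors. -/
theorem exists_nat_combination
    (hodd : ∀ (v w : Fin N) (c₁ : G.Walk v v) (c₂ : G.Walk w w),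
      c₁.IsCycle → c₂.IsCycle → Odd c₁.length → Odd c₂.length →
        ∃ x, x ∈ c₁.support ∧ x ∈ c₂.support)
    {c : Fin N → ℤ} {m : ℤ} {q : Sym2 (Fin N) → ℝ} (hq : ∀ e, 0 ≤ q e)
    (hqG : ∀ e ∉ G.edgeSet, q e = 0) (hqc : ∀ i, ∑ e, q e * rho e i = c i)
    (hm : ∑ e, q e = m) :
    ∃ n : Sym2 (Fin N) → ℕ, (∀ e ∉ G.edgeSet, n e = 0) ∧
      (∀ i, ∑ e, (n e : ℝ) * rho e i = c i) ∧ ∑ e, (n e : ℝ) = m := by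
  classical
  induction hk : (Finset.univ.filter (fun e => Int.fract (q e) ≠ 0)).card
    using Nat.strong_induction_on generalizing q with
  | h k ih =>
  let F := Finset.univ.filter (fun e => Int.fract (q e) ≠ 0)
  have hF : ∀ e, e ∈ F ↔ Int.fract (q e) ≠ 0 := fun e => by simp [F]
  have hFG : ∀ e ∈ F, e ∈ G.edgeSet := by
    intro e he
    by_contra h
    rw [hF, hqG e h] at he
    simp at he
  by_cases hind : LinearIndependent ℝ (fun e : F => rho (e : Sym2 (Fin N)))
  · have hsplit : ∀ f : Sym2 (Fin N) → ℝ, ∑ e ∈ F, Int.fract (q e) * f e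
        = ∑ e, q e * f e - ∑ e, (⌊q e⌋ : ℝ) * f e := by
      intro f
      rw [← Finset.sum_sub_distrib, Finset.sum_filter]
      refine Finset.sum_congr rfl fun e _ => ?_
      rw [← sub_mul, ← Int.fract]
      split_ifs with h
      · rfl
      · rw [not_not.1 h, zero_mul]
    have hcast : ∀ (e : Sym2 (Fin N)) (i : Fin N), rho e i = ((if i ∈ e then 1 else 0 : ℤ) : ℝ) := by
      intro e i
      simp [rho]
    have hempty := eq_empty_of_fractional hodd hFG hind (r := fun e => Int.fract (q e))
      (fun e he => ⟨lt_of_le_of_ne (Int.fract_nonneg _) (Ne.symm ((hF e).1 he)),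
        Int.fract_lt_one _⟩)
      (c := fun i => c i - ∑ e, ⌊q e⌋ * (if i ∈ e then 1 else 0))
      (fun i => by rw [hsplit, hqc]; simp_rw [hcast]; push_cast; rfl)
      (m := m - ∑ e, ⌊q e⌋)
      (by have := hsplit (fun _ => 1)
          simp only [mul_one] at this
          rw [this, hm]; push_cast; rfl)
    have hfloor : ∀ e, ((⌊q e⌋.toNat : ℕ) : ℝ) = q e := by
      intro e
      have h0 : Int.fract (q e) = 0 := by
        by_contra h
        have := (hF e).2 h
        rw [hempty] at this
        simp at this
      have h1 : ((⌊q e⌋.toNat : ℤ) : ℝ) = ⌊q e⌋ := by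
        rw [Int.toNat_of_nonneg (Int.floor_nonneg.2 (hq e))]
      have h2 := Int.floor_add_fract (q e)
      rw [h0, add_zero] at h2
      rw [← Int.cast_natCast, h1, h2]
    refine ⟨fun e => ⌊q e⌋.toNat, fun e he => by simp [hqG e he], fun i => ?_, ?_⟩
    · simp_rw [hfloor]; exact hqc i
    · simp_rw [hfloor]; exact hm
  · rw [Fintype.linearIndependent_iff] at hind
    push Not at hind
    obtain ⟨g, hg, e₁, he₁⟩ := hind
    let z : Sym2 (Fin N) → ℝ := fun e => if h : e ∈ F then g ⟨e, h⟩ else 0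
    have hzF : ∀ e, z e ≠ 0 → e ∈ F := fun e he => by
      by_contra h
      exact he (by simp [z, h])
    have hzsum : ∀ i, ∑ e, z e * rho e i = 0 := by
      intro i
      have h1 := congrFun hg i
      rw [Finset.sum_apply] at h1
      rw [← Finset.sum_subset (Finset.subset_univ F) (fun e _ he => by simp [z, he]),
        ← Finset.sum_coe_sort]
      simpa [z] using h1
    have hztot : ∑ e, z e = 0 := by
      have h1 : ∑ i, ∑ e, z e * rho e i = ∑ e, 2 * z e := by
        rw [Finset.sum_comm]
        refine Finset.sum_congr rfl fun e _ => ?_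
        by_cases he : z e = 0
        · simp [he]
        · rw [← Finset.mul_sum,
            sum_rho (G.not_isDiag_of_mem_edgeSet (hFG e (hzF e he))), mul_comm]
      simp only [hzsum, Finset.sum_const_zero, ← Finset.mul_sum] at h1
      linarith
    obtain ⟨t, ht0, e₂, he₂, ht⟩ := exists_shift hq (z := z)
      (fun h => he₁ (by simpa [z] using congrFun h e₁))
    refine ih _ ?_ (q := fun e => q e + t * z e) ht0 ?_ ?_ ?_ rfl
    · rw [← hk]
      apply Finset.card_lt_card
      rw [Finset.ssubset_iff_of_subset]
      · exact ⟨e₂, hzF e₂ he₂, by simp [ht]⟩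
      · intro e he
        by_contra h
        have hz : z e = 0 := by
          by_contra h'
          exact h (hzF e h')
        simp only [Finset.mem_filter, Finset.mem_univ, true_and, hz, mul_zero, add_zero] at he h
        exact h he
    · intro e he
      have hz : z e = 0 := by
        by_contra h'
        exact he (hFG e (hzF e h'))
      simp [hqG e he, hz]
    · intro i
      simp_rw [add_mul, mul_assoc]
      rw [Finset.sum_add_distrib, hqc, ← Finset.mul_sum, hzsum, mul_zero, add_zero]
    · rw [Finset.sum_add_distrib, hm, ← Finset.mul_sum, hztot, mul_zero, add_zero]

end Fractional

section EdgeRing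

/-- The exponent of the monomial attached to an edge. -/
noncomputable def edgeExp {V : Type*} (e : Sym2 V) : Option V →₀ ℕ :=
  Sym2.lift ⟨fun i j => Finsupp.single (some i) 1 + Finsupp.single (some j) 1 +
    Finsupp.single none 1, fun i j => by
      beta_reduce
      rw [add_comm (Finsupp.single (some i) 1)]⟩ e

theorem edgeMonom_eq_monomial (K : Type*) [Field K] {V : Type*} (e : Sym2 V) :
    edgeMonom K e = monomial (edgeExp e) 1 := by
  induction e with
  | _ a b => simp [edgeMonom, edgeExp, X, monomial_mul]

theorem edgeExp_none {V : Type*} (e : Sym2 V) : edgeExp e none = 1 := by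
  induction e with
  | _ a b => simp [edgeExp]

theorem edgeExp_some {N : ℕ} {e : Sym2 (Fin N)} (he : ¬ e.IsDiag) (i : Fin N) :
    (edgeExp e (some i) : ℝ) = rho e i := by
  induction e with
  | _ a b =>
  rw [rho_mk_apply (by simpa using he)]
  simp [edgeExp, Finsupp.single_apply, eq_comm]

theorem mem_adjoin_monomial_iff {σ ι K : Type*} [Field K] (f : ι → σ →₀ ℕ) (s : Set ι)
    (p : MvPolynomial σ K) :
    p ∈ Algebra.adjoin K ((fun i => monomial (f i) (1 : K)) '' s) ↔
      ∀ m ∈ p.support, m ∈ AddSubmonoid.closure (f '' s) := by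
  classical
  constructor
  · intro hp
    induction hp using Algebra.adjoin_induction with
    | mem x hx =>
      obtain ⟨i, hi, rfl⟩ := hx
      intro m hm
      have := Finset.mem_singleton.1 (support_monomial_subset hm)
      rw [this]
      exact AddSubmonoid.subset_closure ⟨i, hi, rfl⟩
    | algebraMap r =>
      intro m hm
      have := Finset.mem_singleton.1 (support_monomial_subset hm)
      rw [this]
      exact zero_mem _
    | add x y _ _ hx hy =>
      intro m hm
      rcases Finset.mem_union.1 (support_add hm) with h | h
      · exact hx m h
      · exact hy m h
    | mul x y _ _ hx hy =>
      intro m hm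
      obtain ⟨a, ha, b, hb, rfl⟩ := Finset.mem_add.1 (support_mul x y hm)
      exact add_mem (hx a ha) (hy b hb)
  · intro hp
    have key : ∀ m ∈ AddSubmonoid.closure (f '' s), monomial m (1 : K) ∈
        Algebra.adjoin K ((fun i => monomial (f i) (1 : K)) '' s) := by
      intro m hm
      induction hm using AddSubmonoid.closure_induction with
      | mem x hx =>
        obtain ⟨i, hi, rfl⟩ := hx
        exact Algebra.subset_adjoin ⟨i, hi, rfl⟩
      | zero => exact one_mem _
      | add x y _ _ hx hy =>
        have := mul_mem hx hy
        rwa [monomial_mul, one_mul] at this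
    rw [p.as_sum]
    refine sum_mem fun m hm => ?_
    have := Subalgebra.smul_mem _ (key m (hp m hm)) (coeff m p)
    rwa [smul_monomial, smul_eq_mul, mul_one] at this

/-- The edge ring of a graph any two odd cycles of which meet is normal. -/
theorem isIntegrallyClosed_edgeRing {N : ℕ} (K : Type*) [Field K] (G : SimpleGraph (Fin N))
    (hodd : ∀ (v w : Fin N) (c₁ : G.Walk v v) (c₂ : G.Walk w w),
      c₁.IsCycle → c₂.IsCycle → Odd c₁.length → Odd c₂.length →
        ∃ x, x ∈ c₁.support ∧ x ∈ c₂.support) :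
    IsIntegrallyClosed (edgeRing K G) := by
  classical
  have hedge : edgeMonom K '' G.edgeSet
      = (fun e : Sym2 (Fin N) => monomial (edgeExp e) (1 : K)) '' G.edgeSet :=
    Set.image_congr fun e _ => edgeMonom_eq_monomial K e
  refine isIntegrallyClosed_of_saturated (S := AddSubmonoid.closure (edgeExp '' G.edgeSet))
    ?_ ?_ _ fun p => by rw [edgeRing, hedge]; exact mem_adjoin_monomial_iff _ _ p
  · rw [AddSubmonoid.fg_iff]
    exact ⟨_, rfl, G.edgeSet.toFinite.image _⟩
  intro _ _ _ _ c _ k hk hkc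
  have hkR : (0 : ℝ) < k := by exact_mod_cast hk
  have hrep : ∃ f : Sym2 (Fin N) → ℕ, (∀ e ∉ G.edgeSet, f e = 0) ∧
      ∑ e, f e • edgeExp e = k • c := by
    generalize k • c = x at hkc
    induction hkc using AddSubmonoid.closure_induction with
    | mem x hx =>
      obtain ⟨e, he, rfl⟩ := hx
      refine ⟨Pi.single e 1, fun e' he' => ?_, ?_⟩
      · rw [Pi.single_eq_of_ne]
        rintro rfl
        exact he' he
      · rw [Finset.sum_eq_single e]
        · simp
        · intro b _ hb
          simp [hb]
        · simp
    | zero => exact ⟨0, by simp, by simp⟩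
    | add x y _ _ hx hy =>
      obtain ⟨f, hf, hx⟩ := hx
      obtain ⟨g, hg, hy⟩ := hy
      refine ⟨f + g, fun e he => by simp [hf e he, hg e he], ?_⟩
      simp [add_smul, Finset.sum_add_distrib, hx, hy]
  obtain ⟨f, hf, hfc⟩ := hrep
  have hsome : ∀ (g : Sym2 (Fin N) → ℕ), (∀ e ∉ G.edgeSet, g e = 0) → ∀ i,
      (((∑ e, g e • edgeExp e) (some i) : ℕ) : ℝ) = ∑ e, (g e : ℝ) * rho e i := by
    intro g hg i
    rw [Finsupp.finsetSum_apply]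
    push_cast
    refine Finset.sum_congr rfl fun e _ => ?_
    by_cases he : e ∈ G.edgeSet
    · rw [← edgeExp_some (G.not_isDiag_of_mem_edgeSet he)]
      simp
    · simp [hg e he]
  have hnone : ∀ (g : Sym2 (Fin N) → ℕ),
      (((∑ e, g e • edgeExp e) none : ℕ) : ℝ) = ∑ e, (g e : ℝ) := by
    intro g
    rw [Finsupp.finsetSum_apply]
    simp [edgeExp_none]
  obtain ⟨n, hn, hnc, hnm⟩ := exists_nat_combination hodd (q := fun e => f e / k)
    (c := fun i => c (some i)) (m := c none) (fun e => by positivity)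
    (fun e he => by simp [hf e he])
    (fun i => by
      have := hsome f hf i
      rw [hfc] at this
      simp only [div_mul_eq_mul_div]
      rw [← Finset.sum_div, ← this]
      simp [hkR.ne'])
    (by
      have := hnone f
      rw [hfc] at this
      rw [← Finset.sum_div, ← this]
      simp [hkR.ne'])
  have hc : c = ∑ e, n e • edgeExp e := by
    ext i
    have : ((c i : ℕ) : ℝ) = ((∑ e, n e • edgeExp e) i : ℕ) := by
      cases i with
      | none => rw [hnone, hnm]; simp
      | some i => rw [hsome n hn, hnc]; simp
    exact_mod_cast this
  rw [hc]
  refine sum_mem fun e _ => ?_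
  by_cases he : e ∈ G.edgeSet
  · exact nsmul_mem (AddSubmonoid.subset_closure (Set.mem_image_of_mem _ he)) _
  · rw [hn e he, zero_smul]
    exact zero_mem _

end EdgeRing

section ConeBasis

variable {E : Type*} [Fintype E] [DecidableEq E] {V : Type*} [AddCommGroup V] [Module ℝ V]

/-- Finitely many nonzero linear forms are simultaneously nonzero at some positive vector. -/
theorem exists_pos_forall_sum_ne_zero {ι : Type*} [Finite ι] (φ : ι → E → ℝ) (hφ : ∀ i, φ i ≠ 0) :
    ∃ a : E → ℝ, (∀ e, 0 < a e) ∧ ∀ i, ∑ e, φ i e * a e ≠ 0 := by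
  cases nonempty_fintype ι
  let p : ι → MvPolynomial E ℝ := fun i => ∑ e, C (φ i e) * X e
  have hp : ∀ i, p i ≠ 0 := by
    intro i h
    obtain ⟨e, he⟩ := Function.ne_iff.1 (hφ i)
    apply he
    have := congrArg (eval (Pi.single e (1 : ℝ))) h
    simpa [p, Pi.single_apply] using this
  have hprod : ∏ i, p i ≠ 0 := Finset.prod_ne_zero_iff.2 fun i _ => hp i
  by_contra! hcon
  refine hprod (MvPolynomial.funext_set (fun _ => Set.Ioi (0 : ℝ)) (fun _ => Set.Ioi_infinite 0)
    fun a ha => ?_)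
  obtain ⟨i, hi⟩ := hcon a (fun e => ha e (Set.mem_univ e))
  rw [map_prod, map_zero]
  exact Finset.prod_eq_zero (Finset.mem_univ i) (by simpa [p] using hi)

/-- A basis of `V` chosen among the vectors `v e`, together with its coordinate functions. -/
structure ConeBasis (v : E → V) where
  /-- The indices of the basis vectors. -/
  carrier : Finset E
  /-- The coordinates, extended by zero. -/
  co : V →ₗ[ℝ] (E → ℝ)
  co_of_notMem : ∀ x e, e ∉ carrier → co x e = 0
  sum_co : ∀ x, ∑ e, co x e • v e = x
  co_self : ∀ e ∈ carrier, co (v e) = Pi.single e 1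

namespace ConeBasis

variable {v : E → V}

theorem co_sum (B : ConeBasis v) {q : E → ℝ} (hq : ∀ e ∉ B.carrier, q e = 0) :
    B.co (∑ e, q e • v e) = q := by
  rw [map_sum]
  have : ∀ e, B.co (q e • v e) = Pi.single e (q e) := by
    intro e
    by_cases he : e ∈ B.carrier
    · rw [map_smul, B.co_self e he, ← Pi.single_smul, smul_eq_mul, mul_one]
    · simp [hq e he]
  simp_rw [this]
  exact Finset.univ_sum_single q

theorem carrier_injective : Function.Injective (carrier : ConeBasis v → Finset E) := by
  intro B B' h
  have : B.co = B'.co := by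
    ext x : 1
    rw [← B'.co_sum (q := B.co x) (fun e he => B.co_of_notMem x e (h ▸ he)), B.sum_co]
  cases B; cases B'
  simp_all

instance : Finite (ConeBasis v) := Finite.of_injective _ carrier_injective

theorem card_carrier (B : ConeBasis v) : B.carrier.card = Module.finrank ℝ V := by
  let f : V →ₗ[ℝ] (B.carrier → ℝ) := (LinearMap.funLeft ℝ ℝ (fun e : B.carrier => (e : E))) ∘ₗ B.co
  have hf : Function.Bijective f := by
    constructor
    · rw [injective_iff_map_eq_zero]
      intro x hx
      have : B.co x = 0 := by
        ext e
        by_cases he : e ∈ B.carrier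
        · exact congrFun hx ⟨e, he⟩
        · exact B.co_of_notMem x e he
      rw [← B.sum_co x, this]
      simp
    · intro q
      let q' : E → ℝ := fun e => if h : e ∈ B.carrier then q ⟨e, h⟩ else 0
      refine ⟨∑ e, q' e • v e, ?_⟩
      ext e
      have := congrFun (B.co_sum (q := q') (fun e he => by simp [q', he])) e
      simpa [f, q', LinearMap.funLeft_apply] using this
  have := (LinearEquiv.ofBijective f hf).finrank_eq
  simpa using this.symm

/-- A spanning linearly independent subfamily is a `ConeBasis`. -/
theorem exists_carrier_eq {b : Finset E} (hb : LinearIndepOn ℝ v (b : Set E))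
    (hspan : Submodule.span ℝ (v '' (b : Set E)) = ⊤) : ∃ B : ConeBasis v, B.carrier = b := by
  let β : Module.Basis b ℝ V := Module.Basis.mk (v := fun e : b => v e) hb (by
    rw [← hspan, Set.image_eq_range]
    rfl)
  have hβ : ∀ e : b, β e = v e := fun e => Module.Basis.mk_apply _ _ e
  refine ⟨⟨b, LinearMap.pi fun e => if h : e ∈ b then β.coord ⟨e, h⟩ else 0, ?_, ?_, ?_⟩, rfl⟩
  · intro x e he
    simp [he]
  · intro x
    rw [← Finset.sum_subset (Finset.subset_univ b) (fun e _ he => by simp [he]),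
      ← Finset.sum_coe_sort]
    conv_rhs => rw [← β.sum_repr x]
    refine Finset.sum_congr rfl fun e _ => ?_
    simp [hβ]
  · intro e he
    ext f
    by_cases hf : f ∈ b
    · simp only [LinearMap.pi_apply, hf, dite_true, ← hβ ⟨e, he⟩, Module.Basis.coord_apply,
        Module.Basis.repr_self]
      simp [Finsupp.single_apply, Pi.single_apply, eq_comm]
    · have : f ≠ e := by
        rintro rfl
        exact hf he
      simp [hf, this]

/-- The linear functional agreeing with `w` on the basis. -/
noncomputable def dual (B : ConeBasis v) (w : E → ℝ) : V →ₗ[ℝ] ℝ :=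
  (∑ e, w e • LinearMap.proj e) ∘ₗ B.co

theorem dual_apply (B : ConeBasis v) (w : E → ℝ) (x : V) :
    B.dual w x = ∑ e, w e * B.co x e := by
  simp [dual]

theorem dual_self (B : ConeBasis v) (w : E → ℝ) {e : E} (he : e ∈ B.carrier) :
    B.dual w (v e) = w e := by
  rw [dual_apply, B.co_self e he]
  simp [Pi.single_apply]

/-- `B` is a cell of the regular triangulation with heights `w`. -/
def IsCell (B : ConeBasis v) (w : E → ℝ) : Prop :=
  ∀ f ∉ B.carrier, B.dual w (v f) < w f

theorem IsCell.carrier_subset {B B' : ConeBasis v} {w : E → ℝ} (hB : B.IsCell w)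
    (hB' : B'.IsCell w) {x : V} (hx : ∀ e ∈ B.carrier, 0 < B.co x e)
    (hx' : ∀ e ∈ B'.carrier, 0 < B'.co x e) : B.carrier ⊆ B'.carrier := by
  have key : ∀ {A A' : ConeBasis v}, A'.IsCell w → (∀ e ∈ A.carrier, 0 < A.co x e) →
      A'.dual w x ≤ A.dual w x ∧ (A.dual w x ≤ A'.dual w x → A.carrier ⊆ A'.carrier) := by
    intro A A' h' hA
    have hle : ∀ e, A'.dual w (v e) ≤ w e := fun e => by
      by_cases he : e ∈ A'.carrier
      · exact (A'.dual_self w he).le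
      · exact (h' e he).le
    have h1 : A'.dual w x = ∑ e, A.co x e * A'.dual w (v e) := by
      conv_lhs => rw [← A.sum_co x]
      simp
    have hterm : ∀ e ∈ Finset.univ, A.co x e * A'.dual w (v e) ≤ w e * A.co x e := by
      intro e _
      by_cases he : e ∈ A.carrier
      · rw [mul_comm (w e)]
        exact mul_le_mul_of_nonneg_left (hle e) (hA e he).le
      · simp [A.co_of_notMem x e he]
    have h2 : A.dual w x = ∑ e, w e * A.co x e := A.dual_apply w x
    refine ⟨by rw [h1, h2]; exact Finset.sum_le_sum hterm, fun hge e he => ?_⟩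
    by_contra hne
    have : A'.dual w x < A.dual w x := by
      rw [h1, h2]
      refine Finset.sum_lt_sum hterm ⟨e, Finset.mem_univ e, ?_⟩
      rw [mul_comm (w e)]
      exact mul_lt_mul_of_pos_left (h' e hne) (hA e he)
    exact absurd hge (not_le.2 this)
  exact (key hB' hx).2 (key hB hx').1

end ConeBasis

end ConeBasis

section Cells

/-- Existence of an optimal solution of the linear program defining the regular triangulation. -/
theorem exists_optimal {E : Type*} [Fintype E] {N : ℕ} {v : E → Fin N → ℝ}
    (ht : (Fin N → ℝ) →ₗ[ℝ] ℝ) (hht : ∀ e, ht (v e) = 1) (w : E → ℝ)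
    {q₀ : E → ℝ} (hq₀ : ∀ e, 0 ≤ q₀ e) :
    ∃ q : E → ℝ, (∀ e, 0 ≤ q e) ∧ ∑ e, q e • v e = ∑ e, q₀ e • v e ∧
      ∀ z : E → ℝ, ∑ e, z e • v e = 0 → (∀ e, z e < 0 → 0 < q e) → 0 ≤ ∑ e, w e * z e := by
  let F : Set (E → ℝ) := {q | (∀ e, 0 ≤ q e) ∧ ∑ e, q e • v e = ∑ e, q₀ e • v e}
  have hsum : ∀ q ∈ F, ∑ e, q e = ∑ e, q₀ e := by
    intro q hq
    have := congrArg ht hq.2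
    simpa [hht] using this
  have hclosed : IsClosed F := by
    have h1 : IsClosed {q : E → ℝ | ∀ e, 0 ≤ q e} := by
      simp only [Set.ofPred_forall]
      exact isClosed_iInter fun e => isClosed_le continuous_const (continuous_apply e)
    exact h1.inter (isClosed_eq (by fun_prop) continuous_const)
  have hcompact : IsCompact F := by
    refine (isCompact_univ_pi fun _ : E => isCompact_Icc (a := (0 : ℝ)) (b := ∑ e, q₀ e)).of_isClosed_subset
      hclosed fun q hq e _ => ⟨hq.1 e, ?_⟩
    rw [← hsum q hq]
    exact Finset.single_le_sum (fun e _ => hq.1 e) (Finset.mem_univ e)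
  obtain ⟨q, hqF, hmin⟩ := hcompact.exists_isMinOn ⟨q₀, hq₀, rfl⟩
    (f := fun q => ∑ e, w e * q e) (by fun_prop)
  refine ⟨q, hqF.1, hqF.2, fun z hz hneg => ?_⟩
  have hev : ∀ᶠ ε in nhdsWithin (0 : ℝ) (Set.Ioi 0), ∀ e, 0 ≤ q e + ε * z e := by
    rw [Filter.eventually_all]
    intro e
    by_cases he : z e < 0
    · have hc : Filter.Tendsto (fun ε : ℝ => q e + ε * z e) (nhdsWithin 0 (Set.Ioi 0))
          (nhds (q e + 0 * z e)) :=
        Filter.Tendsto.mono_left (Continuous.tendsto (by fun_prop) 0) nhdsWithin_le_nhds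
      have := hc.eventually (lt_mem_nhds (a := 0) (by simpa using hneg e he))
      exact this.mono fun ε h => h.le
    · filter_upwards [self_mem_nhdsWithin] with ε hε
      have := mul_nonneg (le_of_lt hε) (not_lt.1 he)
      linarith [hqF.1 e]
  obtain ⟨ε, hε, hε0⟩ := (hev.and self_mem_nhdsWithin).exists
  have hmem : (fun e => q e + ε * z e) ∈ F := by
    refine ⟨hε, ?_⟩
    simp only [add_smul, mul_smul, Finset.sum_add_distrib, ← Finset.smul_sum, hz, smul_zero,
      add_zero]
    exact hqF.2
  have h1 := isMinOn_iff.1 hmin _ hmem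
  simp only [mul_add, Finset.sum_add_distrib] at h1
  have h2 : ∑ e, w e * (ε * z e) = ε * ∑ e, w e * z e := by
    rw [Finset.mul_sum]
    exact Finset.sum_congr rfl fun e _ => by ring
  rw [h2] at h1
  have hε0' : 0 < ε := hε0
  exact nonneg_of_mul_nonneg_right (by linarith) hε0'

variable {E : Type*} [Fintype E] [DecidableEq E] {N : ℕ} {v : E → Fin N → ℝ}

/-- The relation expressing `v f` through the basis `B`. -/
noncomputable def ConeBasis.relation (B : ConeBasis v) (f : E) : E → ℝ :=
  Pi.single f 1 - B.co (v f)

theorem ConeBasis.sum_relation (B : ConeBasis v) (f : E) : ∑ e, B.relation f e • v e = 0 := by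
  simp [ConeBasis.relation, sub_smul, B.sum_co, Pi.single_apply]

theorem ConeBasis.sum_mul_relation (B : ConeBasis v) (f : E) (w : E → ℝ) :
    ∑ e, w e * B.relation f e = w f - B.dual w (v f) := by
  simp [ConeBasis.relation, mul_sub, B.dual_apply, Pi.single_apply]

/-- A generic point of the cone lies in the interior of a cell. -/
theorem exists_isCell (hspan : Submodule.span ℝ (Set.range v) = ⊤)
    (ht : (Fin N → ℝ) →ₗ[ℝ] ℝ) (hht : ∀ e, ht (v e) = 1) {w : E → ℝ}
    (hw : ∀ (B : ConeBasis v), ∀ f ∉ B.carrier, B.dual w (v f) ≠ w f)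
    {x : Fin N → ℝ} (hx : ∃ q : E → ℝ, (∀ e, 0 ≤ q e) ∧ ∑ e, q e • v e = x)
    (hgen : ∀ (B : ConeBasis v), ∀ e ∈ B.carrier, B.co x e ≠ 0) :
    ∃ B : ConeBasis v, B.IsCell w ∧ ∀ e ∈ B.carrier, 0 < B.co x e := by
  obtain ⟨q₀, hq₀, hq₀x⟩ := hx
  obtain ⟨q, hq, hqx, hopt⟩ := exists_optimal ht hht w hq₀
  rw [hq₀x] at hqx
  let S : Set E := {e | 0 < q e}
  obtain ⟨I, hIS, -, hSI, hI⟩ := exists_linearIndepOn_extension (K := ℝ) (v := v)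
    (s := ∅) (t := S) (linearIndepOn_empty ℝ v) (Set.empty_subset _)
  obtain ⟨b, -, hIb, hb, hbI⟩ := exists_linearIndepOn_extension (K := ℝ) (v := v)
    (s := I) (t := Set.univ) hI (Set.subset_univ _)
  obtain ⟨B, hB⟩ := ConeBasis.exists_carrier_eq (v := v) (b := b.toFinite.toFinset)
    (by simpa using hbI) (by
      rw [Set.Finite.coe_toFinset, ← top_le_iff, ← hspan, Submodule.span_le]
      simpa using hb)
  have hBb : ∀ e, e ∈ B.carrier ↔ e ∈ b := fun e => by simp [hB]
  have hxI : x ∈ Submodule.span ℝ (v '' I) := by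
    rw [← hqx]
    refine sum_mem fun e _ => ?_
    by_cases he : 0 < q e
    · exact Submodule.smul_mem _ _ (hSI ⟨e, he, rfl⟩)
    · rw [le_antisymm (not_lt.1 he) (hq e), zero_smul]
      exact zero_mem _
  have hBI : ∀ e ∈ B.carrier, e ∈ I := by
    intro e he
    by_contra heI
    refine hgen B e he ?_
    have hle : Submodule.span ℝ (v '' I) ≤ LinearMap.ker (LinearMap.proj e ∘ₗ B.co) := by
      rw [Submodule.span_le]
      rintro _ ⟨f, hf, rfl⟩
      have hne : e ≠ f := by
        rintro rfl
        exact heI hf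
      simp [B.co_self f ((hBb f).2 (hIb hf)), hne]
    simpa using hle hxI
  have hBq : ∀ e ∈ B.carrier, 0 < q e := fun e he => hIS (hBI e he)
  have hcell : B.IsCell w := by
    intro f hf
    refine lt_of_le_of_ne ?_ (hw B f hf)
    have := hopt (B.relation f) (B.sum_relation f) fun e he => hBq e (by
      by_contra hne
      rw [ConeBasis.relation, Pi.sub_apply, B.co_of_notMem _ _ hne, sub_zero] at he
      have : (0 : ℝ) ≤ (Pi.single f 1 : E → ℝ) e := by
        rw [Pi.single_apply]
        split_ifs <;> norm_num
      linarith)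
    rw [B.sum_mul_relation] at this
    linarith
  have hqB : ∀ f ∉ B.carrier, q f = 0 := by
    intro f hf
    by_contra hne
    have hpos : 0 < q f := lt_of_le_of_ne (hq f) (Ne.symm hne)
    have := hopt (-B.relation f) (by simp [B.sum_relation f]) fun e he => by
      by_cases heB : e ∈ B.carrier
      · exact hBq e heB
      · by_cases hef : e = f
        · rwa [hef]
        · simp [ConeBasis.relation, B.co_of_notMem _ _ heB, hef] at he
    simp only [Pi.neg_apply, mul_neg, Finset.sum_neg_distrib, B.sum_mul_relation] at this
    linarith [hcell f hf]
  refine ⟨B, hcell, fun e he => ?_⟩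
  rw [← hqx, B.co_sum hqB]
  exact hBq e he

/-- Weights for which every basis is nondegenerate. -/
theorem exists_generic_weight (v : E → Fin N → ℝ) :
    ∃ w : E → ℝ, ∀ (B : ConeBasis v), ∀ f ∉ B.carrier, B.dual w (v f) ≠ w f := by
  obtain ⟨w, -, hw⟩ := exists_pos_forall_sum_ne_zero
    (ι := {p : ConeBasis v × E // p.2 ∉ p.1.carrier}) (fun p => p.1.1.relation p.1.2) (by
      rintro ⟨⟨B, f⟩, hf⟩ h
      have := congrFun h f
      simp [ConeBasis.relation, B.co_of_notMem _ _ hf] at this)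
  refine ⟨w, fun B f hf h => hw ⟨⟨B, f⟩, hf⟩ ?_⟩
  have := B.sum_mul_relation f w
  simp_rw [mul_comm (w _)] at this
  rw [this, h, sub_self]

/-- A point of the cone with nonzero coordinates in every basis. -/
theorem exists_generic_vector (v : E → Fin N → ℝ) :
    ∃ a : E → ℝ, (∀ e, 0 < a e) ∧
      ∀ (B : ConeBasis v), ∀ e ∈ B.carrier, B.co (∑ f, a f • v f) e ≠ 0 := by
  obtain ⟨a, ha, h⟩ := exists_pos_forall_sum_ne_zero
    (ι := {p : ConeBasis v × E // p.2 ∈ p.1.carrier}) (fun p f => p.1.1.co (v f) p.1.2) (by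
      rintro ⟨⟨B, e⟩, he⟩ h
      have := congrFun h e
      simp [B.co_self _ he] at this)
  refine ⟨a, ha, fun B e he h0 => h ⟨⟨B, e⟩, he⟩ ?_⟩
  rw [← h0]
  simp [mul_comm]

/-- Positivity of `x + ε u` for all small `ε > 0`, coordinatewise in `B`. -/
def ConeBasis.LexPos (B : ConeBasis v) (x u : Fin N → ℝ) : Prop :=
  ∀ e ∈ B.carrier, 0 < B.co x e ∨ (B.co x e = 0 ∧ 0 < B.co u e)

theorem eventually_lexPos_iff (a : ℝ) {b : ℝ} (hb : b ≠ 0) :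
    ∀ᶠ ε in nhdsWithin (0 : ℝ) (Set.Ioi 0),
      a + ε * b ≠ 0 ∧ (0 < a + ε * b ↔ 0 < a ∨ (a = 0 ∧ 0 < b)) := by
  have hc : Filter.Tendsto (fun ε : ℝ => a + ε * b) (nhdsWithin 0 (Set.Ioi 0)) (nhds a) := by
    have : Filter.Tendsto (fun ε : ℝ => a + ε * b) (nhds 0) (nhds (a + 0 * b)) :=
      Continuous.tendsto (by fun_prop) 0
    rw [zero_mul, add_zero] at this
    exact this.mono_left nhdsWithin_le_nhds
  rcases lt_trichotomy a 0 with h | h | h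
  · filter_upwards [hc.eventually (gt_mem_nhds h)] with ε hε
    exact ⟨hε.ne, by grind⟩
  · filter_upwards [self_mem_nhdsWithin] with ε hε
    have hε' : 0 < ε := hε
    subst h
    simp [hε'.ne', hb, mul_pos_iff_of_pos_left hε']
  · filter_upwards [hc.eventually (lt_mem_nhds h)] with ε hε
    exact ⟨hε.ne', by grind⟩

theorem eventually_forall_lexPos (x : Fin N → ℝ) {u : Fin N → ℝ}
    (hu : ∀ (B : ConeBasis v), ∀ e ∈ B.carrier, B.co u e ≠ 0) :
    ∀ᶠ ε in nhdsWithin (0 : ℝ) (Set.Ioi 0), ∀ (B : ConeBasis v), ∀ e ∈ B.carrier,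
      B.co (x + ε • u) e ≠ 0 ∧
        (0 < B.co (x + ε • u) e ↔ 0 < B.co x e ∨ (B.co x e = 0 ∧ 0 < B.co u e)) := by
  rw [Filter.eventually_all]
  intro B
  rw [Filter.eventually_all]
  intro e
  by_cases he : e ∈ B.carrier
  · filter_upwards [eventually_lexPos_iff (B.co x e) (hu B e he)] with ε hε _
    simpa using hε
  · simp [he]

theorem exists_lexPos (hspan : Submodule.span ℝ (Set.range v) = ⊤)
    (ht : (Fin N → ℝ) →ₗ[ℝ] ℝ) (hht : ∀ e, ht (v e) = 1) {w : E → ℝ}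
    (hw : ∀ (B : ConeBasis v), ∀ f ∉ B.carrier, B.dual w (v f) ≠ w f)
    {x u : Fin N → ℝ} (hu : ∀ (B : ConeBasis v), ∀ e ∈ B.carrier, B.co u e ≠ 0)
    (hx : ∀ᶠ ε in nhdsWithin (0 : ℝ) (Set.Ioi 0),
      ∃ q : E → ℝ, (∀ e, 0 ≤ q e) ∧ ∑ e, q e • v e = x + ε • u) :
    ∃ B : ConeBasis v, B.IsCell w ∧ B.LexPos x u := by
  obtain ⟨ε, h1, h2⟩ := (hx.and (eventually_forall_lexPos x hu)).exists
  obtain ⟨B, hB, hpos⟩ := exists_isCell hspan ht hht hw h1 (fun B e he => (h2 B e he).1)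
  exact ⟨B, hB, fun e he => (h2 B e he).2.1 (hpos e he)⟩

theorem eq_of_lexPos {w : E → ℝ} {x u : Fin N → ℝ}
    (hu : ∀ (B : ConeBasis v), ∀ e ∈ B.carrier, B.co u e ≠ 0) {B B' : ConeBasis v}
    (hB : B.IsCell w) (hB' : B'.IsCell w) (hx : B.LexPos x u) (hx' : B'.LexPos x u) : B = B' := by
  obtain ⟨ε, h⟩ := (eventually_forall_lexPos x hu).exists
  have h1 : ∀ e ∈ B.carrier, 0 < B.co (x + ε • u) e := fun e he => (h B e he).2.2 (hx e he)
  have h2 : ∀ e ∈ B'.carrier, 0 < B'.co (x + ε • u) e := fun e he => (h B' e he).2.2 (hx' e he)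
  exact ConeBasis.carrier_injective
    (Finset.Subset.antisymm (hB.carrier_subset hB' h1 h2) (hB'.carrier_subset hB h2 h1))

end Cells

section Boxes

/-- An integral vector as a real vector. -/
def latVec (N : ℕ) : (Fin N → ℤ) →+ (Fin N → ℝ) where
  toFun x i := x i
  map_zero' := by ext; simp
  map_add' x y := by ext; simp

theorem latVec_injective (N : ℕ) : Function.Injective (latVec N) := by
  intro x y h
  ext i
  exact Int.cast_injective (α := ℝ) (congrFun h i)

theorem latVec_sum_smul {E : Type*} [Fintype E] {N : ℕ} (n : E → ℤ) (vz : E → Fin N → ℤ) :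
    latVec N (∑ e, n e • vz e) = ∑ e, (n e : ℝ) • latVec N (vz e) := by
  rw [map_sum]
  refine Finset.sum_congr rfl fun e _ => ?_
  ext i
  simp [latVec]

variable {E : Type*} [Fintype E] [DecidableEq E] {N : ℕ} {v : E → Fin N → ℝ}

namespace ConeBasis

/-- The integral parts of the coordinates in `B`, adapted to the half-open cone determined by the
direction `u`. -/
noncomputable def fl (B : ConeBasis v) (u x : Fin N → ℝ) (e : E) : ℤ :=
  if e ∈ B.carrier then (if 0 < B.co u e then ⌊B.co x e⌋ else ⌈B.co x e⌉ - 1) else 0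

theorem fl_of_notMem (B : ConeBasis v) (u x : Fin N → ℝ) {e : E} (he : e ∉ B.carrier) :
    B.fl u x e = 0 := by simp [fl, he]

theorem lexPos_iff (B : ConeBasis v) (u x : Fin N → ℝ) :
    B.LexPos x u ↔ ∀ e, 0 ≤ B.fl u x e := by
  refine forall_congr' fun e => ?_
  by_cases he : e ∈ B.carrier
  · simp only [he, forall_true_left, fl, if_true]
    split_ifs with h
    · rw [Int.floor_nonneg]
      simp only [h, and_true]
      rw [le_iff_lt_or_eq, eq_comm (a := (0 : ℝ))]
    · simp only [h, and_false, or_false]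
      rw [sub_nonneg, Int.one_le_ceil_iff]
  · simp [he, fl]

theorem fl_add (B : ConeBasis v) (u x : Fin N → ℝ) {n : E → ℤ} (hn : ∀ e ∉ B.carrier, n e = 0)
    (e : E) : B.fl u (x + ∑ f, (n f : ℝ) • v f) e = B.fl u x e + n e := by
  have h : B.co (∑ f, (n f : ℝ) • v f) = fun f => (n f : ℝ) :=
    B.co_sum (q := fun f => (n f : ℝ)) (fun e he => by simp [hn e he])
  by_cases he : e ∈ B.carrier
  · simp only [fl, he, if_true, map_add, h, Pi.add_apply, Int.floor_add_intCast,
      Int.ceil_add_intCast]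
    split_ifs <;> ring
  · simp [fl, he, hn e he]

theorem co_mem_Icc (B : ConeBasis v) {u x : Fin N → ℝ} (h : ∀ e, B.fl u x e = 0) (e : E) :
    B.co x e ∈ Set.Icc (0 : ℝ) 1 := by
  by_cases he : e ∈ B.carrier
  · have h1 := h e
    simp only [fl, he, if_true] at h1
    split_ifs at h1 with h2
    · rw [Int.floor_eq_zero_iff] at h1
      exact ⟨h1.1, h1.2.le⟩
    · have h3 : ⌈B.co x e⌉ = 1 := by linarith
      rw [Int.ceil_eq_iff] at h3
      norm_num at h3
      exact ⟨h3.1.le, h3.2⟩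
  · simp [B.co_of_notMem x e he]

end ConeBasis

/-- The integral points in the half-open fundamental parallelepipeds of the cells, recorded with
their cell and their (integral) height. -/
def boxes (v : E → Fin N → ℝ) (ht : (Fin N → ℝ) →ₗ[ℝ] ℝ) (w : E → ℝ) (u : Fin N → ℝ) :
    Set (ConeBasis v × (Fin N → ℤ) × ℕ) :=
  {p | p.1.IsCell w ∧ (∀ e, p.1.fl u (latVec N p.2.1) e = 0) ∧ ht (latVec N p.2.1) = p.2.2}

theorem ConeBasis.height_eq {ht : (Fin N → ℝ) →ₗ[ℝ] ℝ} (hht : ∀ e, ht (v e) = 1)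
    (B : ConeBasis v) (x : Fin N → ℝ) : ht x = ∑ e, B.co x e := by
  conv_lhs => rw [← B.sum_co x]
  simp [hht]

variable {vz : E → Fin N → ℤ} {ht : (Fin N → ℝ) →ₗ[ℝ] ℝ} {w : E → ℝ} {u : Fin N → ℝ}

theorem height_le_card (hht : ∀ e, ht (v e) = 1) {p : ConeBasis v × (Fin N → ℤ) × ℕ}
    (hp : p ∈ boxes v ht w u) : p.2.2 ≤ Fintype.card E := by
  have h1 : (p.2.2 : ℝ) ≤ Fintype.card E := by
    rw [← hp.2.2, p.1.height_eq hht]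
    calc ∑ e, p.1.co (latVec N p.2.1) e ≤ ∑ e : E, (1 : ℝ) :=
          Finset.sum_le_sum fun e _ => (p.1.co_mem_Icc hp.2.1 e).2
      _ = _ := by simp
  exact_mod_cast h1

theorem finite_boxes (hv : ∀ e, v e = latVec N (vz e)) (hht : ∀ e, ht (v e) = 1) :
    (boxes v ht w u).Finite := by
  let M : Fin N → ℤ := fun i => ∑ e, |vz e i|
  refine (Set.finite_univ.prod ((Set.finite_Icc (-M) M).prod
    (Set.finite_Iic (Fintype.card E)))).subset ?_
  rintro p hp
  refine ⟨Set.mem_univ _, ?_, height_le_card hht hp⟩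
  have habs : ∀ i, |p.2.1 i| ≤ M i := by
    intro i
    have h1 : (p.2.1 i : ℝ) = ∑ e, p.1.co (latVec N p.2.1) e * vz e i := by
      have := congrFun (p.1.sum_co (latVec N p.2.1)) i
      simp only [hv, Finset.sum_apply, Pi.smul_apply, smul_eq_mul] at this
      exact this.symm
    have h2 : |(p.2.1 i : ℝ)| ≤ ∑ e, |(vz e i : ℝ)| := by
      rw [h1]
      refine (Finset.abs_sum_le_sum_abs _ _).trans (Finset.sum_le_sum fun e _ => ?_)
      obtain ⟨h3, h4⟩ := p.1.co_mem_Icc hp.2.1 e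
      rw [abs_mul, abs_of_nonneg h3]
      exact mul_le_of_le_one_left (abs_nonneg _) h4
    exact_mod_cast h2
  exact ⟨fun i => (abs_le.1 (habs i)).1, fun i => (abs_le.1 (habs i)).2⟩

/-- Integral points of the cone at height `t`. -/
def conePoints (v : E → Fin N → ℝ) (ht : (Fin N → ℝ) →ₗ[ℝ] ℝ) (t : ℕ) : Set (Fin N → ℤ) :=
  {x | (∃ q : E → ℝ, (∀ e, 0 ≤ q e) ∧ ∑ e, q e • v e = latVec N x) ∧ ht (latVec N x) = t}

/-- Every integral point of the cone is uniquely a box point plus a combination of the basis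
vectors of its cell. -/
theorem card_conePoints (hv : ∀ e, v e = latVec N (vz e)) (hht : ∀ e, ht (v e) = 1)
    (hspan : Submodule.span ℝ (Set.range v) = ⊤)
    (hw : ∀ (B : ConeBasis v), ∀ f ∉ B.carrier, B.dual w (v f) ≠ w f)
    (hu : ∀ (B : ConeBasis v), ∀ e ∈ B.carrier, B.co u e ≠ 0)
    (hucone : ∃ a : E → ℝ, (∀ e, 0 ≤ a e) ∧ ∑ e, a e • v e = u) (t : ℕ) :
    Nat.card (conePoints v ht t) = ∑ p ∈ (finite_boxes (w := w) (u := u) hv hht).toFinset,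
      if p.2.2 ≤ t then (N + (t - p.2.2) - 1).choose (t - p.2.2) else 0 := by
  classical
  let fib : ConeBasis v × (Fin N → ℤ) × ℕ → Finset (E →₀ ℕ) := fun p =>
    if p.2.2 ≤ t then p.1.carrier.finsuppAntidiag (t - p.2.2) else ∅
  have hfib : ∀ p n, n ∈ fib p ↔ p.2.2 + ∑ e, n e = t ∧ ∀ e ∉ p.1.carrier, n e = 0 := by
    intro p n
    have hsum : (∀ e ∉ p.1.carrier, n e = 0) → ∑ e, n e = p.1.carrier.sum n := fun h =>
      (Finset.sum_subset (Finset.subset_univ _) fun e _ he => h e he).symm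
    have hsupp : n.support ⊆ p.1.carrier ↔ ∀ e ∉ p.1.carrier, n e = 0 := by
      simp only [Finset.subset_iff, Finsupp.mem_support_iff]
      exact forall_congr' fun e => not_imp_comm
    by_cases hle : p.2.2 ≤ t
    · simp only [fib, hle, if_true, Finset.mem_finsuppAntidiag, hsupp]
      constructor
      · rintro ⟨h1, h2⟩
        exact ⟨by rw [hsum h2]; omega, h2⟩
      · rintro ⟨h1, h2⟩
        exact ⟨by rw [hsum h2] at h1; omega, h2⟩
    · simp only [fib, hle, if_false, Finset.notMem_empty, false_iff, not_and]
      intro h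
      omega
  have hcard : ∀ p, (fib p).card =
      if p.2.2 ≤ t then (N + (t - p.2.2) - 1).choose (t - p.2.2) else 0 := by
    intro p
    simp only [fib]
    split_ifs
    · rw [Finset.card_finsuppAntidiag_nat_eq_choose, p.1.card_carrier]
      simp
    · rfl
  let Φ : (Σ _ : ConeBasis v × (Fin N → ℤ) × ℕ, E →₀ ℕ) → Fin N → ℤ := fun s =>
    s.1.2.1 + ∑ e, (s.2 e : ℤ) • vz e
  let T := (finite_boxes (w := w) (u := u) hv hht).toFinset.sigma fib
  have hT : ∀ s, s ∈ T ↔ s.1 ∈ boxes v ht w u ∧ s.1.2.2 + ∑ e, s.2 e = t ∧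
      ∀ e ∉ s.1.1.carrier, s.2 e = 0 := fun s => by simp [T, hfib]
  have hΦ : ∀ s, latVec N (Φ s) = latVec N s.1.2.1 + ∑ e, (((s.2 e : ℕ) : ℤ) : ℝ) • v e := by
    intro s
    simp only [Φ, map_add, hv, latVec_sum_smul (fun e => ((s.2 e : ℕ) : ℤ))]
  have hfl : ∀ s ∈ T, ∀ e, s.1.1.fl u (latVec N (Φ s)) e = s.2 e := by
    intro s hs e
    obtain ⟨h1, h2, h3⟩ := (hT s).1 hs
    rw [hΦ, s.1.1.fl_add u _ (n := fun e => (s.2 e : ℤ)) (fun e he => by simp [h3 e he]),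
      h1.2.1, zero_add]
  have hinj : Set.InjOn Φ T := by
    rintro ⟨⟨B, z, k⟩, n⟩ hs ⟨⟨B', z', k'⟩, n'⟩ hs' hEq
    obtain ⟨h1, h2, h3⟩ := (hT _).1 hs
    obtain ⟨h1', h2', h3'⟩ := (hT _).1 hs'
    have hf := hfl _ hs
    have hf' := hfl _ hs'
    rw [← hEq] at hf'
    have hBB : B = B' := eq_of_lexPos hu h1.1 h1'.1
      ((B.lexPos_iff u _).2 fun e => by rw [hf e]; positivity)
      ((B'.lexPos_iff u _).2 fun e => by rw [hf' e]; positivity)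
    subst hBB
    have hn : n = n' := by
      ext e
      have := (hf e).symm.trans (hf' e)
      exact_mod_cast this
    subst hn
    have hz : z = z' := add_right_cancel (hEq : z + _ = z' + _)
    subst hz
    simp only at h2 h2'
    have hk : k = k' := by omega
    subst hk
    rfl
  have himage : conePoints v ht t = (T.image Φ : Finset (Fin N → ℤ)) := by
    ext x
    rw [Finset.mem_coe, Finset.mem_image]
    constructor
    · rintro ⟨⟨q, hq, hqx⟩, hxt⟩
      obtain ⟨a, ha, hau⟩ := hucone
      obtain ⟨B, hB, hpos⟩ := exists_lexPos hspan ht hht hw (x := latVec N x) hu (by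
        filter_upwards [self_mem_nhdsWithin] with ε hε
        refine ⟨fun e => q e + ε * a e,
          fun e => add_nonneg (hq e) (mul_nonneg (le_of_lt hε) (ha e)), ?_⟩
        simp only [add_smul, mul_smul, Finset.sum_add_distrib, ← Finset.smul_sum, hqx, hau])
      rw [B.lexPos_iff] at hpos
      let n : E →₀ ℕ := Finsupp.equivFunOnFinite.symm fun e => (B.fl u (latVec N x) e).toNat
      have hn : ∀ e, ((n e : ℕ) : ℤ) = B.fl u (latVec N x) e := fun e => by
        simp [n, Int.toNat_of_nonneg (hpos e)]
      have hnB : ∀ e ∉ B.carrier, ((n e : ℕ) : ℤ) = 0 := fun e he => by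
        rw [hn, B.fl_of_notMem u _ he]
      let z : Fin N → ℤ := x - ∑ e, (n e : ℤ) • vz e
      have hzx : latVec N z + ∑ e, (((n e : ℕ) : ℤ) : ℝ) • v e = latVec N x := by
        simp only [z, map_sub, hv, latVec_sum_smul (fun e => ((n e : ℕ) : ℤ)), sub_add_cancel]
      have hzfl : ∀ e, B.fl u (latVec N z) e = 0 := by
        intro e
        have := B.fl_add u (latVec N z) (n := fun e => (n e : ℤ)) hnB e
        rw [hzx, hn] at this
        linarith
      have hzt : ht (latVec N z) + ∑ e, (n e : ℝ) = t := by
        rw [← hxt, ← hzx]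
        simp [hht]
      have hz0 : 0 ≤ ht (latVec N z) := by
        rw [B.height_eq hht]
        exact Finset.sum_nonneg fun e _ => (B.co_mem_Icc hzfl e).1
      have hle : ∑ e, n e ≤ t := by
        have : ((∑ e, n e : ℕ) : ℝ) ≤ t := by
          push_cast
          linarith
        exact_mod_cast this
      refine ⟨⟨⟨B, z, t - ∑ e, n e⟩, n⟩, (hT _).2 ⟨⟨hB, hzfl, ?_⟩, ?_, ?_⟩, ?_⟩
      · simp only
        rw [Nat.cast_sub hle]
        push_cast
        linarith
      · simp only
        omega
      · intro e he
        exact_mod_cast hnB e he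
      · simp [Φ, z]
    · rintro ⟨s, hs, rfl⟩
      obtain ⟨h1, h2, h3⟩ := (hT s).1 hs
      refine ⟨⟨fun e => s.1.1.co (latVec N s.1.2.1) e + s.2 e,
        fun e => add_nonneg (s.1.1.co_mem_Icc h1.2.1 e).1 (Nat.cast_nonneg _), ?_⟩, ?_⟩
      · rw [hΦ]
        simp [add_smul, Finset.sum_add_distrib, s.1.1.sum_co]
      · rw [hΦ, map_add, h1.2.2, ← h2]
        simp [hht]
  simp_rw [← hcard]
  rw [himage, Nat.card_coe_set_eq, Set.ncard_coe_finset, Finset.card_image_of_injOn hinj,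
    Finset.card_sigma]

end Boxes

section Delta

/-- The coefficients of `(1 - X) ^ d * ∑ₜ f t Xᵗ` when `f` is the counting function of finitely many
shifted copies of `ℕ ^ d`. -/
theorem sum_choose_mul_eq_card {ι : Type*} (s : Finset ι) (k : ι → ℕ) {d : ℕ} (hd : 0 < d)
    {f : ℕ → ℕ} (hf : ∀ t, f t = ∑ p ∈ s, if k p ≤ t then (d + (t - k p) - 1).choose (t - k p) else 0)
    (i : ℕ) :
    ∑ j ∈ Finset.range (i + 1), (-1 : ℤ) ^ j * (d.choose j : ℤ) * (f (i - j) : ℤ)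
      = (s.filter fun p => k p = i).card := by
  have h1 : PowerSeries.mk (fun t => (f t : ℤ))
      = ∑ p ∈ s, PowerSeries.X ^ k p * (PowerSeries.invOneSubPow ℤ d : PowerSeries ℤ) := by
    ext t
    rw [PowerSeries.coeff_mk, hf, map_sum, Nat.cast_sum]
    refine Finset.sum_congr rfl fun p _ => ?_
    rw [PowerSeries.coeff_X_pow_mul',
      PowerSeries.invOneSubPow_val_eq_mk_sub_one_add_choose_of_pos ℤ d hd]
    split_ifs with h
    · rw [PowerSeries.coeff_mk]
      congr 1
      have h2 : d + (t - k p) - 1 = d - 1 + (t - k p) := by omega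
      rw [h2, Nat.choose_symm_add]
    · simp
  have h2 : (1 - PowerSeries.X) ^ d * PowerSeries.mk (fun t => (f t : ℤ))
      = ∑ p ∈ s, PowerSeries.X ^ k p := by
    rw [h1, Finset.mul_sum]
    refine Finset.sum_congr rfl fun p _ => ?_
    rw [mul_left_comm, ← PowerSeries.invOneSubPow_inv_eq_one_sub_pow, Units.inv_eq_val_inv,
      Units.inv_mul, mul_one]
  have h3 : ∀ j, PowerSeries.coeff j ((1 - PowerSeries.X : PowerSeries ℤ) ^ d)
      = (-1) ^ j * (d.choose j : ℤ) := by
    intro j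
    have h4 : (1 - PowerSeries.X : PowerSeries ℤ) ^ d
        = ((1 + Polynomial.C (-1) * Polynomial.X : Polynomial ℤ) ^ d : Polynomial ℤ) := by
      push_cast
      simp [sub_eq_add_neg]
    rw [h4, Polynomial.coeff_coe]
    have h5 : ((1 + Polynomial.C (-1) * Polynomial.X : Polynomial ℤ) ^ d)
        = ((1 + Polynomial.X : Polynomial ℤ) ^ d).comp (Polynomial.C (-1) * Polynomial.X) := by
      simp
    rw [h5, Polynomial.comp_C_mul_X_coeff, Polynomial.coeff_one_add_X_pow, mul_comm]
  have h6 := congrArg (PowerSeries.coeff i) h2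
  rw [PowerSeries.coeff_mul, Finset.Nat.sum_antidiagonal_eq_sum_range_succ_mk] at h6
  simp only [h3, PowerSeries.coeff_mk] at h6
  rw [h6, map_sum, Finset.card_filter]
  push_cast
  refine Finset.sum_congr rfl fun p _ => ?_
  rw [PowerSeries.coeff_X_pow]
  simp only [eq_comm]

variable {E : Type*} [Fintype E] {N : ℕ} {v : E → Fin N → ℝ}

theorem mem_convexHull_range_iff (x : Fin N → ℝ) :
    x ∈ convexHull ℝ (Set.range v) ↔
      ∃ q : E → ℝ, (∀ e, 0 ≤ q e) ∧ ∑ e, q e = 1 ∧ ∑ e, q e • v e = x := by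
  classical
  constructor
  · intro hx
    have hconv : Convex ℝ {x : Fin N → ℝ | ∃ q : E → ℝ, (∀ e, 0 ≤ q e) ∧ ∑ e, q e = 1 ∧
        ∑ e, q e • v e = x} := by
      rintro _ ⟨q, hq, hq1, rfl⟩ _ ⟨r, hr, hr1, rfl⟩ a b ha hb hab
      refine ⟨fun e => a * q e + b * r e,
        fun e => add_nonneg (mul_nonneg ha (hq e)) (mul_nonneg hb (hr e)), ?_, ?_⟩
      · rw [Finset.sum_add_distrib, ← Finset.mul_sum, ← Finset.mul_sum, hq1, hr1]
        linarith
      · simp only [add_smul, mul_smul, Finset.sum_add_distrib, ← Finset.smul_sum]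
    refine convexHull_min ?_ hconv hx
    rintro _ ⟨e, rfl⟩
    refine ⟨Pi.single e 1, fun f => ?_, by simp, by simp [Pi.single_apply]⟩
    rw [Pi.single_apply]
    split_ifs <;> norm_num
  · rintro ⟨q, hq, hq1, rfl⟩
    exact mem_convexHull_of_exists_fintype q v hq hq1 (fun e => Set.mem_range_self e) rfl

variable {ht : (Fin N → ℝ) →ₗ[ℝ] ℝ}

theorem ehr_eq_card_conePoints [DecidableEq E] (hht : ∀ e, ht (v e) = 1) (t : ℕ) :
    ehr (convexHull ℝ (Set.range v)) t = Nat.card (conePoints v ht t) := by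
  unfold ehr
  have hsum : ∀ q : E → ℝ, ht (∑ e, q e • v e) = ∑ e, q e := fun q => by simp [hht]
  split_ifs with h0
  · subst h0
    have : conePoints v ht 0 = {0} := by
      ext x
      rw [Set.mem_singleton_iff]
      constructor
      · rintro ⟨⟨q, hq, hqx⟩, hx⟩
        rw [← hqx, hsum, Nat.cast_zero,
          Finset.sum_eq_zero_iff_of_nonneg (fun e _ => hq e)] at hx
        apply latVec_injective N
        rw [← hqx, map_zero]
        exact Finset.sum_eq_zero fun e he => by rw [hx e he, zero_smul]
      · rintro rfl
        exact ⟨⟨0, by simp, by simp⟩, by simp⟩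
    rw [this]
    simp
  · have ht0 : (0 : ℝ) < t := by exact_mod_cast Nat.pos_of_ne_zero h0
    refine Nat.card_congr (Equiv.subtypeEquivRight fun x => ?_)
    change latVec N x ∈ (t : ℝ) • convexHull ℝ (Set.range v) ↔ _
    rw [Set.mem_smul_set_iff_inv_smul_mem₀ ht0.ne', mem_convexHull_range_iff]
    constructor
    · rintro ⟨q, hq, hq1, hqx⟩
      have hx : ∑ e, (t * q e) • v e = latVec N x := by
        simp only [mul_smul, ← Finset.smul_sum, hqx, smul_inv_smul₀ ht0.ne']
      refine ⟨⟨fun e => t * q e, fun e => mul_nonneg ht0.le (hq e), hx⟩, ?_⟩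
      rw [← hx, hsum, ← Finset.mul_sum, hq1, mul_one]
    · rintro ⟨⟨q, hq, hqx⟩, hx⟩
      refine ⟨fun e => (t : ℝ)⁻¹ * q e, fun e => mul_nonneg (inv_nonneg.2 ht0.le) (hq e), ?_, ?_⟩
      · rw [← Finset.mul_sum, ← hsum, hqx, hx, inv_mul_cancel₀ ht0.ne']
      · simp only [mul_smul, ← Finset.smul_sum, hqx]

theorem polyDim_add_one (hht : ∀ e, ht (v e) = 1)
    (hspan : Submodule.span ℝ (Set.range v) = ⊤) (hN : 0 < N) :
    polyDim (convexHull ℝ (Set.range v)) + 1 = N := by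
  have hne : Nonempty E := by
    by_contra h
    rw [not_nonempty_iff] at h
    rw [Set.range_eq_empty, Submodule.span_empty] at hspan
    have := congrArg (fun S : Submodule ℝ (Fin N → ℝ) => Module.finrank ℝ S) hspan
    simp only [finrank_bot, finrank_top, Module.finrank_fin_fun] at this
    omega
  obtain ⟨e₀⟩ := hne
  have hdir : (affineSpan ℝ (convexHull ℝ (Set.range v))).direction = LinearMap.ker ht := by
    rw [affineSpan_convexHull, direction_affineSpan]
    apply le_antisymm
    · rw [vectorSpan_def, Submodule.span_le]
      rintro _ ⟨_, ⟨e, rfl⟩, _, ⟨f, rfl⟩, rfl⟩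
      simp [hht]
    · intro x hx
      have hxs : x ∈ Submodule.span ℝ (Set.range v) := hspan ▸ Submodule.mem_top
      obtain ⟨q, rfl⟩ := (Submodule.mem_span_range_iff_exists_fun ℝ).1 hxs
      have hq : ∑ e, q e = 0 := by simpa [hht] using hx
      have : ∑ e, q e • v e = ∑ e, q e • (v e - v e₀) := by
        simp [smul_sub, ← Finset.sum_smul, hq]
      rw [this]
      exact sum_mem fun e _ => Submodule.smul_mem _ _
        (vsub_mem_vectorSpan ℝ (Set.mem_range_self e) (Set.mem_range_self e₀))
  rw [polyDim, hdir]
  have hsurj : LinearMap.range ht = ⊤ := by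
    rw [LinearMap.range_eq_top]
    intro r
    exact ⟨r • v e₀, by simp [hht]⟩
  have := LinearMap.finrank_range_add_finrank_ker ht
  rw [hsurj, finrank_top, Module.finrank_self, Module.finrank_fin_fun] at this
  omega

/-- If the cone over a lattice polytope of dimension `N - 1` has an interior integral point at
height `s`, then the degree of the polytope is at least `N - s`. -/
theorem lt_polyDeg_of_interior {vz : E → Fin N → ℤ} (hv : ∀ e, v e = latVec N (vz e))
    (hht : ∀ e, ht (v e) = 1) {c : E → ℝ} (hc : ∀ e, 0 ≤ c e)
    (hspan : Submodule.span ℝ (v '' {e | 0 < c e}) = ⊤) {y : Fin N → ℤ}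
    (hcy : ∑ e, c e • v e = latVec N y) {s d : ℕ} (hs : ∑ e, c e = s) (hsd : s + d < N) :
    d < polyDeg (convexHull ℝ (Set.range v)) := by
  classical
  have hspan' : Submodule.span ℝ (Set.range v) = ⊤ :=
    top_le_iff.1 (hspan ▸ Submodule.span_mono (Set.image_subset_range _ _))
  have hN : 0 < N := by omega
  obtain ⟨w, hw⟩ := exists_generic_weight v
  obtain ⟨a, ha, hu⟩ := exists_generic_vector v
  set u := ∑ f, a f • v f with hudef
  have hfin := finite_boxes (w := w) (u := u) hv hht
  have hδ : ∀ i, deltaCoeff (convexHull ℝ (Set.range v)) i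
      = (hfin.toFinset.filter fun p => p.2.2 = i).card := by
    intro i
    rw [deltaCoeff, polyDim_add_one hht hspan' hN]
    refine sum_choose_mul_eq_card hfin.toFinset (fun p => p.2.2) hN (fun t => ?_) i
    rw [ehr_eq_card_conePoints hht,
      card_conePoints hv hht hspan' hw hu ⟨a, fun e => (ha e).le, rfl⟩]
  have hbdd : BddAbove {i : ℕ | deltaCoeff (convexHull ℝ (Set.range v)) i ≠ 0} := by
    refine ⟨Fintype.card E, fun i hi => ?_⟩
    rw [Set.mem_ofPred, hδ, Nat.cast_ne_zero, Finset.card_ne_zero] at hi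
    obtain ⟨p, hp⟩ := hi
    rw [Finset.mem_filter, Set.Finite.mem_toFinset] at hp
    rw [← hp.2]
    exact height_le_card hht hp.1
  suffices h : ∃ p ∈ boxes v ht w u, d < p.2.2 by
    obtain ⟨p, hp, hdp⟩ := h
    refine lt_of_lt_of_le hdp (le_csSup hbdd ?_)
    rw [Set.mem_ofPred, hδ, Nat.cast_ne_zero, Finset.card_ne_zero]
    exact ⟨p, by simpa using hp⟩
  have hyneg : ∀ᶠ ε in nhdsWithin (0 : ℝ) (Set.Ioi 0),
      ∃ q : E → ℝ, (∀ e, 0 ≤ q e) ∧ ∑ e, q e • v e = latVec N y + ε • (-u) := by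
    have hus : u ∈ Submodule.span ℝ (v '' {e | 0 < c e}) := hspan ▸ Submodule.mem_top
    rw [Set.image_eq_range] at hus
    obtain ⟨b, hb⟩ := (Submodule.mem_span_range_iff_exists_fun ℝ).1 hus
    let b' : E → ℝ := fun e => if h : 0 < c e then b ⟨e, h⟩ else 0
    have hb' : ∑ e, b' e • v e = u := by
      rw [← hb, ← Finset.sum_subset (Finset.subset_univ (Finset.univ.filter fun e => 0 < c e))
        (fun e _ he => by simp [b', (by simpa using he : ¬ 0 < c e)])]
      rw [Finset.sum_subtype (p := fun e => 0 < c e) _ (by simp)]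
      refine Finset.sum_congr rfl fun e _ => ?_
      simp [b', e.2]
    have hev : ∀ᶠ ε in nhdsWithin (0 : ℝ) (Set.Ioi 0), ∀ e, 0 ≤ c e + ε * (- b' e) := by
      rw [Filter.eventually_all]
      intro e
      by_cases he : 0 < c e
      · have hc : Filter.Tendsto (fun ε : ℝ => c e + ε * (- b' e)) (nhdsWithin 0 (Set.Ioi 0))
            (nhds (c e + 0 * (- b' e))) :=
          Filter.Tendsto.mono_left (Continuous.tendsto (by fun_prop) 0) nhdsWithin_le_nhds
        have := hc.eventually (lt_mem_nhds (a := 0) (by simpa using he))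
        exact this.mono fun ε h => h.le
      · filter_upwards with ε
        simpa [b', he] using hc e
    filter_upwards [hev] with ε hε
    refine ⟨_, hε, ?_⟩
    simp only [add_smul, mul_smul, neg_smul, Finset.sum_add_distrib, ← Finset.smul_sum, hcy,
      Finset.sum_neg_distrib, hb']
  obtain ⟨B, hB, hpos⟩ := exists_lexPos hspan' ht hht hw (x := latVec N y) (u := -u)
    (fun B e he => by simpa using hu B e he) hyneg
  set q := B.co (latVec N y) with hq
  -- the integral parts of the coordinates of `-y`, for the half-open cone of direction `u`
  let n : E → ℤ := fun e => - B.fl u (-latVec N y) e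
  have hn : ∀ e ∉ B.carrier, n e = 0 := fun e he => by simp [n, B.fl_of_notMem u _ he]
  let z : Fin N → ℤ := -y + ∑ e, n e • vz e
  have hz : latVec N z = -latVec N y + ∑ e, (n e : ℝ) • v e := by
    simp only [z, map_add, map_neg, hv, latVec_sum_smul]
  have hzfl : ∀ e, B.fl u (latVec N z) e = 0 := by
    intro e
    rw [hz, B.fl_add u _ hn]
    simp [n]
  have hn1 : ∀ e ∈ B.carrier, 1 ≤ n e := by
    intro e he
    have h1 := hpos e he
    simp only [n, ConeBasis.fl, he, if_true, map_neg, Pi.neg_apply] at h1 ⊢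
    rw [← hq] at h1 ⊢
    split_ifs with h2
    · have h3 : 0 < q e := by
        rcases h1 with h | h
        · exact h
        · linarith [h.2]
      rw [Int.floor_neg, neg_neg]
      exact Int.one_le_ceil_iff.2 h3
    · have h3 : 0 ≤ q e := by
        rcases h1 with h | h
        · exact h.le
        · exact h.1.ge
      rw [Int.ceil_neg]
      have := Int.floor_nonneg.2 h3
      linarith
  have hcardB : (N : ℤ) ≤ ∑ e, n e := by
    have h1 := B.card_carrier
    rw [Module.finrank_fin_fun] at h1
    rw [← Finset.sum_subset (Finset.subset_univ B.carrier) (fun e _ he => hn e he)]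
    simpa [h1] using Finset.card_nsmul_le_sum B.carrier n 1 hn1
  have hhty : ht (latVec N y) = s := by
    rw [← hcy, ← hs]
    simp [hht]
  have hhtz : ht (latVec N z) = ((∑ e, n e - s : ℤ) : ℝ) := by
    rw [hz, map_add, map_neg, hhty]
    push_cast
    simp [hht]
    ring
  refine ⟨⟨B, z, (∑ e, n e - s).toNat⟩, ⟨hB, hzfl, ?_⟩, ?_⟩
  · rw [hhtz]
    have : ((∑ e, n e - s).toNat : ℤ) = ∑ e, n e - s := Int.toNat_of_nonneg (by omega)
    exact_mod_cast this.symm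
  · simp only
    omega

end Delta

section InteriorPoint

variable {N : ℕ} {G : SimpleGraph (Fin N)}

theorem sum_count_mul {E : Type*} [Fintype E] [DecidableEq E] (l : List E) (f : E → ℝ) :
    ∑ e, (l.count e : ℝ) * f e = (l.map f).sum := by
  induction l with
  | nil => simp
  | cons a l ih =>
    simp [List.count_cons, add_mul, Finset.sum_add_distrib, ih, add_comm]

/-- The edge vectors along a walk add up to an even vector, up to the two ends. -/
theorem SimpleGraph.Walk.exists_sum_rho {a b : Fin N} (p : G.Walk a b) (i : Fin N) :
    ∃ m : ℤ, (p.edges.map fun e => rho e i).sum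
      = 2 * m + (if i = a then 1 else 0) - (if i = b then 1 else 0) := by
  induction p with
  | nil => exact ⟨0, by simp⟩
  | @cons a b d h p ih =>
    obtain ⟨m, hm⟩ := ih
    refine ⟨m + if i = b then 1 else 0, ?_⟩
    rw [SimpleGraph.Walk.edges_cons, List.map_cons, List.sum_cons, hm, rho_mk_apply h.ne]
    push_cast
    ring

theorem SimpleGraph.Walk.eq_zero_of_alternating {φ : Fin N → ℝ} {a b : Fin N} (p : G.Walk a b)
    (hφ : ∀ x y, s(x, y) ∈ p.edges → φ x + φ y = 0) :
    φ b = (-1) ^ p.length * φ a ∧ (φ a = 0 → ∀ x ∈ p.support, φ x = 0) := by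
  induction p with
  | nil => simp
  | @cons a b d h p ih =>
    obtain ⟨h1, h2⟩ := ih fun x y hxy => hφ x y (by simp [hxy])
    have h3 : φ a + φ b = 0 := hφ a b (by simp)
    refine ⟨?_, fun h0 x hx => ?_⟩
    · rw [h1, SimpleGraph.Walk.length_cons, pow_succ, eq_neg_of_add_eq_zero_right h3]
      ring
    · rw [SimpleGraph.Walk.support_cons, List.mem_cons] at hx
      rcases hx with rfl | hx
      · exact h0
      · exact h2 (by linarith) x hx

theorem SimpleGraph.Walk.eq_zero_of_alternating_of_odd {φ : Fin N → ℝ} {a : Fin N}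
    (p : G.Walk a a) (hp : Odd p.length) (hφ : ∀ x y, s(x, y) ∈ p.edges → φ x + φ y = 0) :
    ∀ x ∈ p.support, φ x = 0 := by
  obtain ⟨h1, h2⟩ := p.eq_zero_of_alternating hφ
  rw [hp.neg_one_pow] at h1
  exact h2 (by linarith)

/-- A weight on the edges with integral vertex sums and total weight at most `|U| - 3`, such that
the edges of positive weight span the coordinates in `U`. -/
structure IsSpanningWeight (G : SimpleGraph (Fin N)) (U : Finset (Fin N)) (c : Sym2 (Fin N) → ℝ)
    (s : ℕ) : Prop where
  nonneg : ∀ e, 0 ≤ c e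
  eq_zero : ∀ e ∉ G.edgeSet, c e = 0
  integral : ∀ i, ∃ m : ℤ, ∑ e, c e * rho e i = m
  total : ∑ e, c e = s
  le_card : s + 3 ≤ U.card
  spanning : ∀ φ : Fin N → ℝ, (∀ a b, 0 < c s(a, b) → φ a + φ b = 0) → ∀ i ∈ U, φ i = 0

theorem exists_isSpanningWeight_of_isCycle {v w : Fin N} {c₁ : G.Walk v v} {c₂ : G.Walk w w}
    (h₁ : c₁.IsCycle) (h₂ : c₂.IsCycle) (ho₁ : Odd c₁.length) (ho₂ : Odd c₂.length)
    (hdisj : ∀ x, x ∈ c₁.support → x ∉ c₂.support) :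
    ∃ c s, IsSpanningWeight G (c₁.support.toFinset ∪ c₂.support.toFinset) c s := by
  obtain ⟨s, hs⟩ := ho₁.add_odd ho₂
  have hcount : ∀ {x : Fin N} (p : G.Walk x x) (e : Sym2 (Fin N)), e ∈ p.edges →
      (0 : ℝ) < p.edges.count e := fun p e he => by
    exact_mod_cast List.count_pos_iff.2 he
  refine ⟨fun e => (c₁.edges.count e + c₂.edges.count e) / 2, s, ?_, ?_, ?_, ?_, ?_, ?_⟩
  · intro e
    positivity
  · intro e he
    rw [List.count_eq_zero.2 fun h => he (c₁.edges_subset_edgeSet h),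
      List.count_eq_zero.2 fun h => he (c₂.edges_subset_edgeSet h)]
    simp
  · intro i
    obtain ⟨m₁, hm₁⟩ := c₁.exists_sum_rho i
    obtain ⟨m₂, hm₂⟩ := c₂.exists_sum_rho i
    refine ⟨m₁ + m₂, ?_⟩
    simp only [div_mul_eq_mul_div, add_mul]
    rw [← Finset.sum_div, Finset.sum_add_distrib, sum_count_mul _ fun e => rho e i,
      sum_count_mul _ fun e => rho e i, hm₁, hm₂]
    push_cast
    ring
  · have key := fun l : List (Sym2 (Fin N)) => sum_count_mul l fun _ => (1 : ℝ)
    simp only [mul_one, List.map_const', List.sum_replicate, nsmul_eq_mul] at key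
    rw [← Finset.sum_div, Finset.sum_add_distrib, key, key, SimpleGraph.Walk.length_edges,
      SimpleGraph.Walk.length_edges]
    have : (c₁.length : ℝ) + c₂.length = s + s := by exact_mod_cast hs
    rw [this]
    ring
  · rw [Finset.card_union_of_disjoint, h₁.card_toFinset_support, h₂.card_toFinset_support]
    · have := h₁.three_le_length
      have := h₂.three_le_length
      omega
    · rw [Finset.disjoint_left]
      simpa using hdisj
  · intro φ hφ i hi
    rw [Finset.mem_union, List.mem_toFinset, List.mem_toFinset] at hi
    rcases hi with hi | hi
    · refine c₁.eq_zero_of_alternating_of_odd ho₁ (fun x y hxy => hφ x y ?_) i hi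
      have := hcount c₁ _ hxy
      positivity
    · refine c₂.eq_zero_of_alternating_of_odd ho₂ (fun x y hxy => hφ x y ?_) i hi
      have := hcount c₂ _ hxy
      positivity

theorem IsSpanningWeight.insert {U : Finset (Fin N)} {c : Sym2 (Fin N) → ℝ} {s : ℕ}
    (h : IsSpanningWeight G U c s) {a b : Fin N} (hab : G.Adj a b) (ha : a ∈ U) (hb : b ∉ U) :
    IsSpanningWeight G (insert b U) (c + Pi.single s(a, b) 1) (s + 1) := by
  have hle : ∀ e, c e ≤ (c + Pi.single s(a, b) 1 : Sym2 (Fin N) → ℝ) e := by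
    intro e
    rw [Pi.add_apply, Pi.single_apply]
    split_ifs <;> linarith
  refine ⟨fun e => (h.nonneg e).trans (hle e), ?_, ?_, ?_, ?_, ?_⟩
  · intro e he
    have : e ≠ s(a, b) := by
      rintro rfl
      exact he hab
    simp [h.eq_zero e he, this]
  · intro i
    obtain ⟨m, hm⟩ := h.integral i
    refine ⟨m + if i ∈ s(a, b) then 1 else 0, ?_⟩
    simp only [Pi.add_apply, add_mul, Finset.sum_add_distrib, hm]
    simp only [Pi.single_apply, ite_mul, one_mul, zero_mul, Finset.sum_ite_eq', Finset.mem_univ,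
      if_true]
    simp [rho]
  · simp [Finset.sum_add_distrib, h.total]
  · rw [Finset.card_insert_of_notMem hb]
    have := h.le_card
    omega
  · intro φ hφ
    have hU := h.spanning φ fun x y hxy => hφ x y (hxy.trans_le (hle _))
    have h1 : φ a + φ b = 0 := hφ a b (by
      have := h.nonneg s(a, b)
      simp only [Pi.add_apply, Pi.single_eq_same]
      linarith)
    intro i hi
    rcases Finset.mem_insert.1 hi with rfl | hi
    · have := hU a ha
      linarith
    · exact hU i hi

theorem IsSpanningWeight.exists_univ (hG : G.Connected) {U : Finset (Fin N)}
    {c : Sym2 (Fin N) → ℝ} {s : ℕ} (h : IsSpanningWeight G U c s) :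
    ∃ c' s', IsSpanningWeight G Finset.univ c' s' := by
  induction hk : Uᶜ.card generalizing U c s with
  | zero =>
    rw [Finset.card_eq_zero, Finset.compl_eq_empty_iff] at hk
    subst hk
    exact ⟨c, s, h⟩
  | succ k ih =>
    obtain ⟨x, hx⟩ : U.Nonempty := Finset.card_pos.1 (by have := h.le_card; omega)
    obtain ⟨y, hy⟩ : Uᶜ.Nonempty := Finset.card_pos.1 (by omega)
    obtain ⟨p⟩ := hG.preconnected x y
    obtain ⟨d, -, hd₁, hd₂⟩ := p.exists_boundary_dart (U : Set (Fin N)) hx (by simpa using hy)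
    refine ih (h.insert d.adj hd₁ hd₂) ?_
    rw [Finset.compl_insert, Finset.card_erase_of_mem (by simpa using hd₂), hk]
    rfl

/-- Two disjoint odd cycles in a connected graph force the edge polytope to have degree at least
three. -/
theorem two_lt_polyDeg_of_isCycle (hG : G.Connected) {v w : Fin N} {c₁ : G.Walk v v}
    {c₂ : G.Walk w w} (h₁ : c₁.IsCycle) (h₂ : c₂.IsCycle) (ho₁ : Odd c₁.length)
    (ho₂ : Odd c₂.length) (hdisj : ∀ x, x ∈ c₁.support → x ∉ c₂.support) :
    2 < polyDeg (edgePolytope G) := by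
  classical
  obtain ⟨c₀, s₀, h₀⟩ := exists_isSpanningWeight_of_isCycle h₁ h₂ ho₁ ho₂ hdisj
  obtain ⟨c, s, h⟩ := h₀.exists_univ hG
  choose y hy using h.integral
  have hsum : ∀ f : Sym2 (Fin N) → ℝ, ∑ e : G.edgeSet, c e * f e = ∑ e, c e * f e := by
    intro f
    rw [← Finset.sum_subtype (Finset.univ.filter fun e => e ∈ G.edgeSet) (by simp)
      (fun e => c e * f e)]
    exact Finset.sum_subset (Finset.subset_univ _) fun e _ he => by
      rw [h.eq_zero e (by simpa using he), zero_mul]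
  rw [edgePolytope, Set.image_eq_range]
  refine lt_polyDeg_of_interior (E := G.edgeSet)
    (ht := (2⁻¹ : ℝ) • ∑ i, LinearMap.proj i)
    (vz := fun e i => if i ∈ (e : Sym2 (Fin N)) then 1 else 0) (c := fun e => c e) (y := y) (s := s)
    ?_ ?_ (fun e => h.nonneg e) ?_ ?_ ?_ ?_
  · intro e
    ext i
    simp [rho, latVec]
  · intro e
    simp [sum_rho (G.not_isDiag_of_mem_edgeSet e.2)]
  · by_contra hne
    obtain ⟨f, hf0, hf⟩ := Submodule.exists_le_ker_of_lt_top _ (lt_top_iff_ne_top.2 hne)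
    apply hf0
    have hfx : ∀ x, f x = ∑ i, f (Pi.single i 1) * x i := by
      intro x
      conv_lhs => rw [← Finset.univ_sum_single x]
      rw [map_sum]
      refine Finset.sum_congr rfl fun i _ => ?_
      rw [mul_comm, ← smul_eq_mul, ← map_smul, ← Pi.single_smul, smul_eq_mul, mul_one]
    have hφ := h.spanning (fun i => f (Pi.single i 1)) fun a b hab => by
      have hedge : s(a, b) ∈ G.edgeSet := by
        by_contra hn
        rw [h.eq_zero _ hn] at hab
        exact lt_irrefl _ hab
      have h0 : f (rho s(a, b)) = 0 :=
        hf (Submodule.subset_span ⟨⟨s(a, b), hedge⟩, hab, rfl⟩)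
      rwa [hfx, sum_mul_rho_mk (fun i => f (Pi.single i 1)) (G.ne_of_adj hedge)] at h0
    refine LinearMap.ext fun x => ?_
    rw [hfx]
    simp [hφ]
  · ext i
    have := (hsum fun e => rho e i).trans (hy i)
    simpa [latVec] using this
  · have := hsum fun _ => 1
    simp only [mul_one] at this
    rw [this, h.total]
  · have := h.le_card
    rw [Finset.card_univ, Fintype.card_fin] at this
    omega

end InteriorPoint

/-- If `deg(P_G) ≤ 2` for a finite connected simple graph `G`, then
any two odd cycles of `G` have a common vertex; in particular `G` satisfies the odd
cycle condition and the edge ring `K[G]` is Cohen–Macaulay, equivalently (by the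
theorem of Ohsugi–Hibi) normal, i.e. integrally closed. -/
theorem odd_cycles_intersect_of_polyDeg_le_two
    {N : ℕ} (K : Type*) [Field K] (G : SimpleGraph (Fin N)) (hG : G.Connected)
    (hdeg : polyDeg (edgePolytope G) ≤ 2) :
    (∀ (v w : Fin N) (c₁ : G.Walk v v) (c₂ : G.Walk w w),
      c₁.IsCycle → c₂.IsCycle → Odd c₁.length → Odd c₂.length →
        ∃ x, x ∈ c₁.support ∧ x ∈ c₂.support) ∧
    (∀ (v w : Fin N) (c₁ : G.Walk v v) (c₂ : G.Walk w w),
      c₁.IsCycle → c₂.IsCycle → Odd c₁.length → Odd c₂.length →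
        (∀ x, x ∈ c₁.support → x ∉ c₂.support) →
          ∃ a b, a ∈ c₁.support ∧ b ∈ c₂.support ∧ G.Adj a b) ∧
    IsIntegrallyClosed (edgeRing K G) := by
  have hodd : ∀ (v w : Fin N) (c₁ : G.Walk v v) (c₂ : G.Walk w w),
      c₁.IsCycle → c₂.IsCycle → Odd c₁.length → Odd c₂.length →
        ∃ x, x ∈ c₁.support ∧ x ∈ c₂.support := by
    intro v w c₁ c₂ h₁ h₂ ho₁ ho₂
    by_contra! hdisj
    exact absurd hdeg (not_le.2 (two_lt_polyDeg_of_isCycle hG h₁ h₂ ho₁ ho₂ hdisj))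
  refine ⟨hodd, fun v w c₁ c₂ h₁ h₂ ho₁ ho₂ hdisj => ?_, isIntegrallyClosed_edgeRing K G hodd⟩
  obtain ⟨x, hx₁, hx₂⟩ := hodd v w c₁ c₂ h₁ h₂ ho₁ ho₂
  exact absurd hx₂ (hdisj x hx₁)
end
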